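/- Every admissible function α ∈ R^l can be written uniquely as a linear combination of products of indecomposable admissible functions. Precisely: the linear map, given by multiplication of functions, from the direct sum—over all unordered partitions of {1,…,l} into nonempty blocks—of the tensor products, over the blocks B of the partition, of the spaces R₀^{|B|} of indecomposable admissible functions in the variables {z_i : i ∈ B}, into R^l, is a linear isomorphism onto R^l. -/

import Mathlib

open scoped Classical

noncomputable section

namespace Griess

open MvPolynomial

variable {k : Type} [Field k]

/-- The field `k(z₁,…,z_l)` of rational functions over `k` in `l` variables. -/
abbrev RF (k : Type) [Field k] (l : ℕ) : Type := FractionRing (MvPolynomial (Fin l) k)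

/-- The variable `zᵢ` as an element of the rational function field. -/
def zv {k : Type} [Field k] {l : ℕ} (i : Fin l) : RF k l :=
  algebraMap (MvPolynomial (Fin l) k) (RF k l) (MvPolynomial.X i)

/-- The space `Φ^l` of rational functions of the form
`p(z₁,…,z_l) · ∏_{i<j} (zᵢ - z_j)^{k_{ij}}`. -/
def Phi (k : Type) [Field k] (l : ℕ) : Set (RF k l) :=
  { x | ∃ (p : MvPolynomial (Fin l) k) (e : Fin l → Fin l → ℤ),
      x = algebraMap (MvPolynomial (Fin l) k) (RF k l) p *
        ∏ i : Fin l, ∏ j : Fin l, (if i < j then (zv i - zv j) ^ e i j else 1) }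

/-- `D` is the family of partial derivative operators `∂_{z₁},…,∂_{z_l}`:
a family of `k`-linear derivations with `D i (z j) = δ_{ij}`. -/
def IsPartialDeriv {l : ℕ} (D : Fin l → Derivation k (RF k l) (RF k l)) : Prop :=
  ∀ i j : Fin l, D i (zv j) = if j = i then 1 else 0

/-- The operator `Δ = Σᵢ ∂_{zᵢ}`. -/
def Delta {l : ℕ} (D : Fin l → Derivation k (RF k l) (RF k l)) (α : RF k l) : RF k l :=
  ∑ i, D i α

/-- The operator `Δ*(n₁,…,n_l) = Σᵢ (zᵢ² ∂_{zᵢ} + nᵢ zᵢ)`. -/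
def DeltaStar {l : ℕ} (D : Fin l → Derivation k (RF k l) (RF k l)) (n : Fin l → ℤ)
    (α : RF k l) : RF k l :=
  ∑ i, ((zv i) ^ 2 * D i α + (n i : RF k l) * zv i * α)

section Subst

variable {l : ℕ}

/-- The embedding of polynomials in `z₁,…,z_l` into rational functions of
`z₁,…,z_l` and one extra variable `t` (`= RatFunc.X`). -/
def toRatFuncHom (k : Type) [Field k] (l : ℕ) :
    Polynomial (MvPolynomial (Fin l) k) →+* RatFunc (RF k l) :=
  (algebraMap (Polynomial (RF k l)) (RatFunc (RF k l))).comp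
    (Polynomial.mapRingHom (algebraMap (MvPolynomial (Fin l) k) (RF k l)))

lemma toRatFuncHom_injective : Function.Injective (toRatFuncHom k l) := by
  have h1 : Function.Injective (algebraMap (Polynomial (RF k l)) (RatFunc (RF k l))) :=
    IsFractionRing.injective _ _
  have h2 : Function.Injective
      (Polynomial.mapRingHom (algebraMap (MvPolynomial (Fin l) k) (RF k l))) :=
    Polynomial.map_injective _ (IsFractionRing.injective _ _)
  exact fun a b hab => h2 (h1 hab)

/-- Polynomial level substitution `z_j ↦ t·z_j` for `j ∈ J`. -/
def scaleAux (k : Type) [Field k] (l : ℕ) (J : Finset (Fin l)) :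
    MvPolynomial (Fin l) k →+* Polynomial (MvPolynomial (Fin l) k) :=
  (MvPolynomial.aeval (R := k) fun i =>
    if i ∈ J then Polynomial.X * Polynomial.C (MvPolynomial.X i)
    else Polynomial.C (MvPolynomial.X i)).toRingHom

lemma scaleAux_injective (J : Finset (Fin l)) :
    Function.Injective (scaleAux k l J) := by
  have h : (Polynomial.evalRingHom (1 : MvPolynomial (Fin l) k)).comp (scaleAux k l J)
      = RingHom.id _ := by
    apply MvPolynomial.ringHom_ext
    · intro r; simp [scaleAux]
    · intro i; by_cases hi : i ∈ J <;> simp [scaleAux, hi]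
  intro p q hpq
  have hp := DFunLike.congr_fun h p
  have hq := DFunLike.congr_fun h q
  simp only [RingHom.comp_apply, RingHom.id_apply] at hp hq
  rw [← hp, ← hq, hpq]

/-- The substitution `z_j ↦ t·z_j` (for `j ∈ J`), as a map from rational functions
in `z₁,…,z_l` to rational functions in `z₁,…,z_l` and `t`.  Reading off the
coefficients of the Laurent expansion in `t` at `t = 0` of `scaleJ J α` yields the
decomposition of `α` into its homogeneous components with respect to the total degree
in the variables `{z_j : j ∈ J}`, i.e. the expansion of `α` in the domain where the
variables of `J` are much smaller than the remaining variables. -/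
def scaleJ (J : Finset (Fin l)) : RF k l →+* RatFunc (RF k l) :=
  IsFractionRing.lift (g := (toRatFuncHom k l).comp (scaleAux k l J))
    (fun a b hab => scaleAux_injective J (toRatFuncHom_injective hab))

/-- Polynomial level substitution `z_i ↦ z_j + t`. -/
def subPairAux (k : Type) [Field k] (l : ℕ) (i j : Fin l) :
    MvPolynomial (Fin l) k →+* Polynomial (MvPolynomial (Fin l) k) :=
  (MvPolynomial.aeval (R := k) fun s =>
    if s = i then Polynomial.X + Polynomial.C (MvPolynomial.X j)
    else Polynomial.C (MvPolynomial.X s)).toRingHom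

lemma subPairAux_injective (i j : Fin l) :
    Function.Injective (subPairAux k l i j) := by
  have h : (Polynomial.evalRingHom (MvPolynomial.X i - MvPolynomial.X j)).comp
      (subPairAux k l i j) = RingHom.id _ := by
    apply MvPolynomial.ringHom_ext
    · intro r; simp [subPairAux]
    · intro s; by_cases hs : s = i <;> simp [subPairAux, hs]
  intro p q hpq
  have hp := DFunLike.congr_fun h p
  have hq := DFunLike.congr_fun h q
  simp only [RingHom.comp_apply, RingHom.id_apply] at hp hq
  rw [← hp, ← hq, hpq]

/-- The substitution `z_i ↦ z_j + t`, as a map from rational functions in `z₁,…,z_l`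
to rational functions in the variables `z₁,…,z_l` and `t`.  Reading off the Laurent
coefficients in `t` at `t = 0` yields the expansion of a rational function in powers
of `z_i - z_j`, with coefficients not involving `z_i`. -/
def subPair (i j : Fin l) : RF k l →+* RatFunc (RF k l) :=
  IsFractionRing.lift (g := (toRatFuncHom k l).comp (subPairAux k l i j))
    (fun a b hab => subPairAux_injective i j (toRatFuncHom_injective hab))

end Subst

/-- The coefficient of `tᵐ` in the Laurent expansion at `t = 0` of a rational
function of `t`. -/
def lcoeff {L : Type} [Field L] (m : ℤ) (f : RatFunc L) : L :=
  (f : LaurentSeries L).coeff m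

/-- The component `(α)_n` of `α` of degree `n` with respect to the partition
`{1,…,l} = Jᶜ ⊔ J` and the weights `d`:  the part of the expansion of `α` in the
domain where the variables of `J` are much smaller than those of `Jᶜ` whose total
degree in the variables `{z_j : j ∈ J}` equals `n - Σ_{j∈J} d_j`. -/
def component {l : ℕ} (J : Finset (Fin l)) (d : Fin l → ℤ) (n : ℤ) (α : RF k l) :
    RF k l :=
  lcoeff (n - ∑ j ∈ J, d j) (scaleJ J α)

/-- `α` is homogeneous of total degree `d` in the variables `{z_i : i ∈ S}`:
substituting `z_i ↦ t·z_i` for `i ∈ S` multiplies `α` by `t^d`. -/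
def IsHomogeneousOn {l : ℕ} (S : Finset (Fin l)) (d : ℤ) (α : RF k l) : Prop :=
  scaleJ S α = RatFunc.X ^ d * RatFunc.C α

/-- `ρ^{(m)}_{ij} α`: the coefficient of `(z_i - z_j)^m` in the expansion of `α`
in powers of `z_i - z_j` (the coefficients do not involve `z_i`). -/
def rho {l : ℕ} (i j : Fin l) (m : ℤ) (α : RF k l) : RF k l :=
  lcoeff m (subPair i j α)

/-- `α` is a rational function of the variables `{z_i : i ∈ S}` only. -/
def dependsOnlyOn {l : ℕ} (S : Finset (Fin l)) (α : RF k l) : Prop :=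
  α ∈ Subfield.closure (Set.range (algebraMap k (RF k l)) ∪ {x | ∃ i ∈ S, x = zv i})

/-- `α` is an admissible function of the variables `{z_i : i ∈ S}` (the space
`R^{|S|}`):  `α ∈ Φ` is a rational function of the variables of `S` only, it is
`(4,…,4)`-regular and homogeneous of degree `-2|S|` in these variables, and all its
components of negative degree, as well as those of degree `1`, vanish (with respect
to every partition of `S` and all weights equal to `2`). -/
def Admissible {l : ℕ} (D : Fin l → Derivation k (RF k l) (RF k l)) (S : Finset (Fin l))
    (α : RF k l) : Prop :=
  α ∈ Phi k l ∧ dependsOnlyOn S α ∧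
    (∑ i ∈ S, ((zv i) ^ 2 * D i α + 4 * zv i * α)) = 0 ∧
    IsHomogeneousOn S (-(2 * (S.card : ℤ))) α ∧
    ∀ J ⊆ S, ∀ n : ℤ, (n < 0 ∨ n = 1) → component J (fun _ => 2) n α = 0

/-- `α` is an indecomposable admissible function of the variables `{z_i : i ∈ S}`
(the space `R₀^{|S|}`): admissible, and all the components `(α)₀` with respect to
partitions of `S` into two nonempty parts vanish. -/
def AdmissibleInd {l : ℕ} (D : Fin l → Derivation k (RF k l) (RF k l))
    (S : Finset (Fin l)) (α : RF k l) : Prop :=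
  Admissible D S α ∧
    ∀ J ⊆ S, J ≠ ∅ → J ≠ S → component J (fun _ => 2) 0 α = 0

section Shift

variable {l : ℕ}

/-- Polynomial level substitution `z_s ↦ z_s - z_t` for `s ∈ S`. -/
def shiftAuxP (k : Type) [Field k] (l : ℕ) (S : Finset (Fin l)) (t : Fin l) :
    MvPolynomial (Fin l) k →+* MvPolynomial (Fin l) k :=
  (MvPolynomial.aeval (R := k) fun s =>
    if s ∈ S then MvPolynomial.X s - MvPolynomial.X t else MvPolynomial.X s).toRingHom

lemma shiftAuxP_injective (S : Finset (Fin l)) (t : Fin l) (ht : t ∉ S) :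
    Function.Injective (shiftAuxP k l S t) := by
  have h : ((MvPolynomial.aeval (R := k) fun s =>
      if s ∈ S then MvPolynomial.X s + MvPolynomial.X t
      else MvPolynomial.X s).toRingHom).comp (shiftAuxP k l S t) = RingHom.id _ := by
    apply MvPolynomial.ringHom_ext
    · intro r; simp [shiftAuxP]
    · intro s
      by_cases hs : s ∈ S
      · have hst : s ≠ t := fun hst => ht (hst ▸ hs)
        simp [shiftAuxP, hs, ht]
      · simp [shiftAuxP, hs]
  intro p q hpq
  have hp := DFunLike.congr_fun h p
  have hq := DFunLike.congr_fun h q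
  simp only [RingHom.comp_apply, RingHom.id_apply] at hp hq
  rw [← hp, ← hq, hpq]

/-- The shift operator substituting `z_s - z_t` for `z_s`, for all `s ∈ S`. -/
def shiftT (S : Finset (Fin l)) (t : Fin l) (ht : t ∉ S) : RF k l →+* RF k l :=
  IsFractionRing.lift
    (g := (algebraMap (MvPolynomial (Fin l) k) (RF k l)).comp (shiftAuxP k l S t))
    (fun a b hab =>
      shiftAuxP_injective S t ht (IsFractionRing.injective _ _ hab))

/-- The operator `ℰ = Σ_{s ∈ S} (-z_s⁻¹ ∂_{z_s} + 2 z_s⁻²)`. -/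
def curlyE {l : ℕ} (D : Fin l → Derivation k (RF k l) (RF k l)) (S : Finset (Fin l))
    (β : RF k l) : RF k l :=
  ∑ s ∈ S, (-((zv s)⁻¹ * D s β) + 2 * (zv s) ^ (-2 : ℤ) * β)

end Shift

end Griess

namespace Griess
set_option synthInstance.maxHeartbeats 1000000
set_option maxHeartbeats 1000000

open scoped TensorProduct DirectSum

/-- The linear map, given by multiplication of rational functions, from the direct
sum — over all unordered partitions `P` of `{1,…,l}` into nonempty blocks — of the
tensor products, over the blocks `B` of `P`, of the spaces `R₀^{|B|}` of
indecomposable admissible functions of the variables `{z_i : i ∈ B}`, into the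
field of rational functions. -/
noncomputable def productMap {k : Type} [Field k] {l : ℕ}
    (D : Fin l → Derivation k (RF k l) (RF k l)) :
    (⨁ P : Finpartition (Finset.univ : Finset (Fin l)),
        ⨂[k] B : ↥P.parts,
          ↥(Submodule.span k {α : RF k l | AdmissibleInd D (↑B) α})) →ₗ[k] RF k l :=
  DirectSum.toModule k (Finpartition (Finset.univ : Finset (Fin l))) (RF k l)
    (fun P => PiTensorProduct.lift
      ((MultilinearMap.mkPiAlgebra k ↥P.parts (RF k l)).compLinearMap
        (fun B => (Submodule.span k {α : RF k l | AdmissibleInd D (↑B) α}).subtype)))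

set_option linter.unusedSimpArgs false
section LS
variable {K : Type} [Field K]

lemma ls_bdd (f : LaurentSeries K) : ∃ N : ℤ, ∀ n < N, f.coeff n = 0 :=
  ⟨f.order, fun _ hn => HahnSeries.coeff_eq_zero_of_lt_order hn⟩

lemma ls_coeff_mul (f g : LaurentSeries K) (a b : ℤ) (hf : ∀ n < a, f.coeff n = 0)
    (hg : ∀ n < b, g.coeff n = 0) (n : ℤ) :
    (f * g).coeff n = ∑ i ∈ Finset.Icc a (n - b), f.coeff i * g.coeff (n - i) := by
  rw [HahnSeries.coeff_mul]
  apply Finset.sum_of_injOn (fun x => x.1)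
  · rintro ⟨x1, x2⟩ hx ⟨y1, y2⟩ hy h
    simp only [Finset.mem_coe, Finset.mem_antidiagonal] at hx hy h
    obtain ⟨_, _, hx⟩ := hx
    obtain ⟨_, _, hy⟩ := hy
    ext <;> simp <;> omega
  · rintro ⟨x1, x2⟩ hx
    simp only [Finset.mem_coe, Finset.mem_antidiagonal, HahnSeries.mem_support] at hx
    obtain ⟨h1, h2, hx⟩ := hx
    have h1' : a ≤ x1 := by
      by_contra h; exact h1 (hf _ (by omega))
    have h2' : b ≤ x2 := by
      by_contra h; exact h2 (hg _ (by omega))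
    simp; omega
  · intro i hi h
    by_contra hne
    apply h
    have h1 := left_ne_zero_of_mul hne
    have h2 := right_ne_zero_of_mul hne
    exact ⟨(i, n - i), by simp [Finset.mem_antidiagonal, h1, h2], rfl⟩
  · rintro ⟨x1, x2⟩ hx
    simp only [Finset.mem_antidiagonal] at hx
    obtain ⟨h1, h2, hx⟩ := hx
    simp only
    congr 2; omega

lemma ls_low_mul (f g : LaurentSeries K) (a b : ℤ) (hf : ∀ n < a, f.coeff n = 0)
    (hg : ∀ n < b, g.coeff n = 0) (n : ℤ) (hn : n < a + b) : (f * g).coeff n = 0 := by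
  rw [ls_coeff_mul f g a b hf hg, Finset.Icc_eq_empty (by omega), Finset.sum_empty]

lemma ls_lead_mul (f g : LaurentSeries K) (a b : ℤ) (hf : ∀ n < a, f.coeff n = 0)
    (hg : ∀ n < b, g.coeff n = 0) : (f * g).coeff (a + b) = f.coeff a * g.coeff b := by
  rw [ls_coeff_mul f g a b hf hg]
  simp

lemma ls_lead1_mul (f g : LaurentSeries K) (a b : ℤ) (hf : ∀ n < a, f.coeff n = 0)
    (hg : ∀ n < b, g.coeff n = 0) (hf1 : f.coeff (a + 1) = 0) (hg1 : g.coeff (b + 1) = 0) :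
    (f * g).coeff (a + b + 1) = 0 := by
  rw [ls_coeff_mul f g a b hf hg]
  apply Finset.sum_eq_zero
  intro i hi
  simp only [Finset.mem_Icc] at hi
  have : i = a ∨ i = a + 1 := by omega
  rcases this with rfl | rfl
  · rw [show i + b + 1 - i = b + 1 by ring, hg1, mul_zero]
  · rw [hf1, zero_mul]

lemma ls_inv_low (f g : LaurentSeries K) (h : f * g = 1) (b : ℤ) (hf : ∀ n < b, f.coeff n = 0)
    (hb : f.coeff b ≠ 0) : ∀ n < -b, g.coeff n = 0 := by
  have hf0 : f ≠ 0 := by rintro rfl; simp at hb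
  have hg0 : g ≠ 0 := by rintro rfl; simp at h
  have ho : f.order = b := by
    apply le_antisymm (HahnSeries.order_le_of_coeff_ne_zero hb)
    by_contra hlt
    push Not at hlt
    exact HahnSeries.coeff_order_eq_zero.not.2 hf0 (hf _ hlt)
  have h2 := HahnSeries.order_mul hf0 hg0
  rw [h, HahnSeries.order_one, ho] at h2
  intro n hn
  exact HahnSeries.coeff_eq_zero_of_lt_order (by omega)

lemma ls_coeff_one (n : ℤ) : (1 : LaurentSeries K).coeff n = if n = 0 then 1 else 0 := by
  rw [HahnSeries.coeff_one]; split_ifs <;> rfl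

/-- coefficientwise operator `f ↦ Σ (c n f_n + d f_n) tⁿ`. -/
def lsop {k : Type} [Field k] [Algebra k K] (c : K) (d : Derivation k K K) :
    LaurentSeries K →+ LaurentSeries K where
  toFun f :=
    { coeff := fun n => c * n * f.coeff n + d (f.coeff n)
      isPWO_support' := f.isPWO_support.mono (by
        intro n hn h0
        apply hn
        simp [h0]) }
  map_zero' := by ext n; simp
  map_add' f g := by ext n; simp; ring

lemma lsop_coeff {k : Type} [Field k] [Algebra k K] (c : K) (d : Derivation k K K)
    (f : LaurentSeries K) (n : ℤ) :
    (lsop c d f).coeff n = c * n * f.coeff n + d (f.coeff n) := rfl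

lemma lsop_mul {k : Type} [Field k] [Algebra k K] (c : K) (d : Derivation k K K)
    (f g : LaurentSeries K) : lsop c d (f * g) = f * lsop c d g + g * lsop c d f := by
  obtain ⟨a, ha⟩ := ls_bdd f
  obtain ⟨b, hb⟩ := ls_bdd g
  ext n
  have ha' : ∀ n < a, (lsop c d f).coeff n = 0 := fun n hn => by simp [lsop_coeff, ha n hn]
  have hb' : ∀ n < b, (lsop c d g).coeff n = 0 := fun n hn => by simp [lsop_coeff, hb n hn]
  rw [mul_comm g, HahnSeries.coeff_add, lsop_coeff, ls_coeff_mul f g a b ha hb,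
    ls_coeff_mul _ _ a b ha hb', ls_coeff_mul _ _ a b ha' hb, map_sum, Finset.mul_sum,
    ← Finset.sum_add_distrib, ← Finset.sum_add_distrib]
  apply Finset.sum_congr rfl
  intro i _
  rw [lsop_coeff, lsop_coeff, Derivation.leibniz]
  push_cast
  simp only [smul_eq_mul]
  ring

lemma lsop_C {k : Type} [Field k] [Algebra k K] (c : K) (d : Derivation k K K)
    (x : K) : lsop c d (HahnSeries.C x) = HahnSeries.C (d x) := by
  ext n
  rw [lsop_coeff]
  by_cases hn : n = 0
  · subst hn; simp [HahnSeries.C_apply]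
  · simp [HahnSeries.C_apply, HahnSeries.coeff_single, hn]

lemma lsop_single {k : Type} [Field k] [Algebra k K] (c : K) (d : Derivation k K K)
    (m : ℤ) (x : K) : lsop c d (HahnSeries.single m x) = HahnSeries.single m (c * m * x + d x) := by
  ext n
  rw [lsop_coeff]
  by_cases hn : n = m
  · subst hn; simp
  · simp [HahnSeries.coeff_single, hn]

/-- coefficientwise ring hom -/
def lsmap {L : Type} [Field L] (φ : K →+* L) : LaurentSeries K →+* LaurentSeries L where
  toFun f := f.map φ
  map_zero' := by ext; simp
  map_one' := by
    ext n
    rw [HahnSeries.map_coeff, ls_coeff_one, ls_coeff_one]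
    split_ifs <;> simp
  map_add' f g := by ext; simp
  map_mul' f g := HahnSeries.map_mul (φ : K →ₙ+* L)

lemma lsmap_coeff {L : Type} [Field L] (φ : K →+* L) (f : LaurentSeries K) (n : ℤ) :
    (lsmap φ f).coeff n = φ (f.coeff n) := rfl

lemma lsmap_single {L : Type} [Field L] (φ : K →+* L) (m : ℤ) (x : K) :
    lsmap φ (HahnSeries.single m x) = HahnSeries.single m (φ x) := by
  ext n
  rw [lsmap_coeff]
  by_cases hn : n = m
  · subst hn; simp
  · simp [HahnSeries.coeff_single, hn]

lemma lsmap_C {L : Type} [Field L] (φ : K →+* L) (x : K) :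
    lsmap φ (HahnSeries.C x) = HahnSeries.C (φ x) := lsmap_single φ 0 x

/-- The set on which two expansions commute. -/
def XX (E F : K →+* LaurentSeries K) : Subring K where
  carrier := {x | ∀ n m : ℤ, (E ((F x).coeff m)).coeff n = (F ((E x).coeff n)).coeff m}
  zero_mem' := by intro n m; simp
  one_mem' := by
    intro n m
    simp only [map_one, ls_coeff_one]
    split_ifs <;> simp [ls_coeff_one, *]
  add_mem' := by
    intro x y hx hy n m
    simp only [map_add, HahnSeries.coeff_add, hx n m, hy n m]
  neg_mem' := by
    intro x hx n m
    simp only [map_neg, HahnSeries.coeff_neg, hx n m]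
  mul_mem' := by
    intro x y hx hy n m
    obtain ⟨a, ha⟩ := ls_bdd (E x)
    obtain ⟨b, hb⟩ := ls_bdd (E y)
    obtain ⟨a', ha'⟩ := ls_bdd (F x)
    obtain ⟨b', hb'⟩ := ls_bdd (F y)
    rw [map_mul, map_mul, ls_coeff_mul _ _ a' b' ha' hb', ls_coeff_mul _ _ a b ha hb,
      map_sum, map_sum, HahnSeries.coeff_sum, HahnSeries.coeff_sum]
    have h1 : ∀ i ∈ Finset.Icc a' (m - b'), (E ((F x).coeff i * (F y).coeff (m - i))).coeff n =
        ∑ j ∈ Finset.Icc a (n - b), (E ((F x).coeff i)).coeff j *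
          (E ((F y).coeff (m - i))).coeff (n - j) := by
      intro i _
      rw [map_mul]
      apply ls_coeff_mul
      · intro j hj; rw [hx, ha j hj]; simp
      · intro j hj; rw [hy, hb j hj]; simp
    have h2 : ∀ j ∈ Finset.Icc a (n - b), (F ((E x).coeff j * (E y).coeff (n - j))).coeff m =
        ∑ i ∈ Finset.Icc a' (m - b'), (F ((E x).coeff j)).coeff i *
          (F ((E y).coeff (n - j))).coeff (m - i) := by
      intro i _
      rw [map_mul]
      apply ls_coeff_mul
      · intro j hj; rw [← hx, ha' j hj]; simp
      · intro j hj; rw [← hy, hb' j hj]; simp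
    rw [Finset.sum_congr rfl h1, Finset.sum_congr rfl h2, Finset.sum_comm]
    apply Finset.sum_congr rfl; intro j _
    apply Finset.sum_congr rfl; intro i _
    rw [hx, hy]

lemma mem_XX {E F : K →+* LaurentSeries K} {x : K} : x ∈ XX E F ↔
    ∀ n m : ℤ, (E ((F x).coeff m)).coeff n = (F ((E x).coeff n)).coeff m := Iff.rfl

lemma XX_inv {E F : K →+* LaurentSeries K} {f : K} (hf : f ∈ XX E F) (a b : ℤ)
    (h1 : ∀ n m, n < a ∨ m < b → (E ((F f).coeff m)).coeff n = 0)
    (h0 : (E ((F f).coeff b)).coeff a ≠ 0) : f⁻¹ ∈ XX E F := by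
  have hf0 : f ≠ 0 := by rintro rfl; simp at h0
  have hFf : ∀ m < b, (F f).coeff m = 0 := by
    intro m hm
    apply E.injective
    ext n
    rw [h1 n m (Or.inr hm)]; simp
  have hEf : ∀ n < a, (E f).coeff n = 0 := by
    intro n hn
    apply F.injective
    ext m
    rw [← hf, h1 n m (Or.inl hn)]; simp
  have hFb : (F f).coeff b ≠ 0 := by intro h; rw [h] at h0; simp at h0
  have hEa : (E f).coeff a ≠ 0 := by intro h; rw [hf, h] at h0; simp at h0
  set g := f⁻¹ with hg
  have hfg : f * g = 1 := mul_inv_cancel₀ hf0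
  have hFfg : F f * F g = 1 := by rw [← map_mul, hfg, map_one]
  have hEfg : E f * E g = 1 := by rw [← map_mul, hfg, map_one]
  have hFg := ls_inv_low _ _ hFfg b hFf hFb
  have hEg := ls_inv_low _ _ hEfg a hEf hEa
  let Q : ℤ → LaurentSeries K := fun m =>
    HahnSeries.ofSuppBddBelow (fun n => (F ((E g).coeff n)).coeff m) ⟨-a, by
      intro n hn
      by_contra h
      push Not at h
      apply hn
      simp [hEg n h]⟩
  have hQ : ∀ m n, (Q m).coeff n = (F ((E g).coeff n)).coeff m := fun m n => rfl
  have hQa : ∀ m, ∀ n < -a, (Q m).coeff n = 0 := by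
    intro m n hn; rw [hQ, hEg n hn]; simp
  have hc : ∀ j, ∀ n < a, (E ((F f).coeff j)).coeff n = 0 := fun j n hn => h1 n j (Or.inl hn)
  have hQb : ∀ m < -b, Q m = 0 := by
    intro m hm
    ext n
    rw [hQ]
    -- F ((E g)_n) has order ≥ -b ; proved by induction below
    revert m
    have key : ∀ t : ℕ, ∀ n : ℤ, n < -a + t → ∀ m < -b, (F ((E g).coeff n)).coeff m = 0 := by
      intro t
      induction t with
      | zero => intro n hn m _; rw [hEg n (by simpa using hn)]; simp
      | succ t ih =>
        intro n hn m hm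
        by_cases hn' : n < -a + t
        · exact ih n hn' m hm
        have hprod := congrArg (fun x => F (x.coeff (n + a))) hEfg
        rw [ls_coeff_mul _ _ a (-a) hEf hEg, map_sum] at hprod
        have hlow : ∀ j < b, (F ((E f).coeff a)).coeff j = 0 := by
          intro j hj; rw [← hf, hFf j hj]; simp
        rw [show n + a - -a = n + a + a by ring] at hprod
        rw [← Finset.add_sum_erase _ _ (a := a) (by simp; omega)] at hprod
        rw [map_mul, show n + a - a = n by ring] at hprod
        set R := ∑ x ∈ (Finset.Icc a (n + a + a)).erase a,
          F ((E f).coeff x * (E g).coeff (n + a - x)) with hR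
        have hRlow : ∀ j < 0, R.coeff j = 0 := by
          intro j hj
          rw [hR, HahnSeries.coeff_sum]
          apply Finset.sum_eq_zero
          intro i hi
          simp only [Finset.mem_erase, Finset.mem_Icc] at hi
          rw [map_mul]
          apply ls_low_mul _ _ b (-b)
          · intro q hq; rw [← hf, hFf q hq]; simp
          · intro q hq; exact ih _ (by omega) q hq
          · omega
        have h1low : ∀ j < 0, (F ((1 : LaurentSeries K).coeff (n + a))).coeff j = 0 := by
          intro j hj
          rw [ls_coeff_one]
          split_ifs
          · rw [map_one, ls_coeff_one, if_neg (by omega)]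
          · simp
        have hG : F ((E g).coeff n) = (F ((E f).coeff a))⁻¹ *
            (F ((1 : LaurentSeries K).coeff (n + a)) - R) := by
          have : F ((E f).coeff a) ≠ 0 := by simpa using hEa
          rw [← hprod]; field_simp; ring
        rw [hG]
        have hinv : ∀ j < -b, ((F ((E f).coeff a))⁻¹).coeff j = 0 := by
          apply ls_inv_low (F ((E f).coeff a)) _ _ b hlow
          · rw [← hf]; exact h0
          · exact mul_inv_cancel₀ (by simpa using hEa)
        apply ls_low_mul _ _ (-b) 0 hinv
        · intro j hj; rw [HahnSeries.coeff_sub, h1low j hj, hRlow j hj, sub_zero]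
        · omega
    intro m hm
    exact key (n + a).toNat.succ n (by omega) m hm
  have eqA : ∀ M : ℤ, ∑ j ∈ Finset.Icc b (M + b), E ((F f).coeff j) * E ((F g).coeff (M - j)) =
      if M = 0 then 1 else 0 := by
    intro M
    have := congrArg (fun x => E (x.coeff M)) hFfg
    rw [ls_coeff_mul _ _ b (-b) hFf hFg, map_sum, ls_coeff_one] at this
    rw [show M + b = M - -b by ring]
    simp only [← map_mul]
    rw [this]; split_ifs <;> simp
  have eqB : ∀ M : ℤ, ∑ j ∈ Finset.Icc b (M + b), E ((F f).coeff j) * Q (M - j) =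
      if M = 0 then 1 else 0 := by
    intro M
    ext N
    rw [HahnSeries.coeff_sum]
    have e1 : ∀ j ∈ Finset.Icc b (M + b), (E ((F f).coeff j) * Q (M - j)).coeff N =
        ∑ i ∈ Finset.Icc a (N + a), (F ((E f).coeff i)).coeff j *
          (F ((E g).coeff (N - i))).coeff (M - j) := by
      intro j _
      rw [ls_coeff_mul _ _ a (-a) (hc j) (hQa _), show N - -a = N + a by ring]
      apply Finset.sum_congr rfl
      intro i _
      rw [hf, hQ]
    rw [Finset.sum_congr rfl e1, Finset.sum_comm]
    have := congrArg (fun x => (F (x.coeff N)).coeff M) hEfg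
    rw [ls_coeff_mul _ _ a (-a) hEf hEg, map_sum, HahnSeries.coeff_sum,
      show N - -a = N + a by ring] at this
    have e2 : ∀ i ∈ Finset.Icc a (N + a), (F ((E f).coeff i * (E g).coeff (N - i))).coeff M =
        ∑ j ∈ Finset.Icc b (M + b), (F ((E f).coeff i)).coeff j *
          (F ((E g).coeff (N - i))).coeff (M - j) := by
      intro i _
      rw [map_mul, ls_coeff_mul _ _ b (-b), show M - -b = M + b by ring]
      · intro j hj; rw [← hf, hFf j hj]; simp
      · intro j hj; rw [← hQ, hQb j hj]; simp
    rw [Finset.sum_congr rfl e2] at this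
    rw [this, ls_coeff_one]
    by_cases hN : N = 0 <;> by_cases hM : M = 0 <;> simp [hN, hM, ls_coeff_one]
  have main : ∀ t : ℕ, ∀ m : ℤ, m < -b + t → E ((F g).coeff m) = Q m := by
    intro t
    induction t with
    | zero => intro m hm; rw [hQb m (by simpa using hm), hFg m (by simpa using hm), map_zero]
    | succ t ih =>
      intro m hm
      by_cases hm' : m < -b + t
      · exact ih m hm'
      have hA := eqA (m + b)
      rw [← eqB (m + b)] at hA
      rw [← Finset.add_sum_erase _ _ (a := b) (by simp; omega),
        ← Finset.add_sum_erase _ (fun j => E ((F f).coeff j) * Q (m + b - j)) (a := b)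
          (by simp; omega)] at hA
      have : ∑ x ∈ (Finset.Icc b (m + b + b)).erase b,
          E ((F f).coeff x) * E ((F g).coeff (m + b - x)) =
          ∑ x ∈ (Finset.Icc b (m + b + b)).erase b, E ((F f).coeff x) * Q (m + b - x) := by
        apply Finset.sum_congr rfl
        intro x hx
        simp only [Finset.mem_erase, Finset.mem_Icc] at hx
        rw [ih _ (by omega)]
      rw [this, add_left_inj, show m + b - b = m by ring] at hA
      exact mul_left_cancel₀ (by simpa using hFb) hA
  intro n m
  rw [main (m + b).toNat.succ m (by omega), hQ]

end LS

section R2L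
open scoped RatFunc
variable {L : Type} [Field L]

/-- Laurent expansion of a rational function -/
def r2l : RatFunc L →+* LaurentSeries L := algebraMap _ _

lemma r2l_X : r2l (RatFunc.X : RatFunc L) = HahnSeries.single 1 1 := RatFunc.coe_X

lemma r2l_alg (p : Polynomial L) : r2l (algebraMap (Polynomial L) (RatFunc L) p) =
    algebraMap (Polynomial L) (LaurentSeries L) p := by
  unfold r2l
  rw [← IsScalarTower.algebraMap_apply]

lemma r2l_C (x : L) : r2l (RatFunc.C x) = HahnSeries.C x := by
  rw [← RatFunc.algebraMap_C, r2l_alg]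
  simp

lemma r2l_mono (x : L) (n : ℤ) : r2l (RatFunc.X ^ n * RatFunc.C x) = HahnSeries.single n x := by
  rw [map_mul, map_zpow₀, r2l_X, r2l_C, ← RatFunc.single_zpow, HahnSeries.C_apply,
      HahnSeries.single_mul_single]
  simp

lemma lcoeff_eq (m : ℤ) (f : RatFunc L) : lcoeff m f = (r2l f).coeff m := rfl

end R2L

section Fld
variable {k : Type} [Field k] {l : ℕ}

/-- The field `k(z_i : i ∈ S)`. -/
def KS (k : Type) [Field k] {l : ℕ} (S : Finset (Fin l)) : Subfield (RF k l) :=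
  Subfield.closure (Set.range (algebraMap k (RF k l)) ∪ {x | ∃ i ∈ S, x = zv i})

lemma KS_iff {S : Finset (Fin l)} {x : RF k l} : dependsOnlyOn S x ↔ x ∈ KS k S := Iff.rfl

lemma const_mem_KS (S : Finset (Fin l)) (c : k) : algebraMap k (RF k l) c ∈ KS k S :=
  Subfield.subset_closure (Or.inl ⟨c, rfl⟩)

lemma zv_mem_KS {S : Finset (Fin l)} {i : Fin l} (hi : i ∈ S) : (zv i : RF k l) ∈ KS k S :=
  Subfield.subset_closure (Or.inr ⟨i, hi, rfl⟩)

lemma smul_mem_KS {S : Finset (Fin l)} (c : k) {x : RF k l} (hx : x ∈ KS k S) :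
    c • x ∈ KS k S := by
  rw [Algebra.smul_def]; exact mul_mem (const_mem_KS S c) hx

lemma KS_le {S : Finset (Fin l)} {T : Subfield (RF k l)}
    (h1 : ∀ c, algebraMap k (RF k l) c ∈ T) (h2 : ∀ i ∈ S, (zv i : RF k l) ∈ T) : KS k S ≤ T := by
  apply Subfield.closure_le.2
  rintro x (⟨c, rfl⟩ | ⟨i, hi, rfl⟩)
  · exact h1 c
  · exact h2 i hi

lemma KS_mono {S T : Finset (Fin l)} (h : S ⊆ T) : KS k S ≤ KS k T :=
  KS_le (const_mem_KS T) (fun _ hi => zv_mem_KS (h hi))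

lemma alg_C (c : k) : algebraMap (MvPolynomial (Fin l) k) (RF k l) (MvPolynomial.C c) =
    algebraMap k (RF k l) c := by
  rw [← MvPolynomial.algebraMap_eq, ← IsScalarTower.algebraMap_apply]

lemma alg_mem_KS_univ (p : MvPolynomial (Fin l) k) :
    algebraMap (MvPolynomial (Fin l) k) (RF k l) p ∈ KS k (Finset.univ : Finset (Fin l)) := by
  induction p using MvPolynomial.induction_on with
  | C c => rw [alg_C]; exact const_mem_KS _ c
  | add p q hp hq => rw [map_add]; exact add_mem hp hq
  | mul_X p i hp => rw [map_mul]; exact mul_mem hp (zv_mem_KS (Finset.mem_univ i))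

lemma mem_KS_univ (x : RF k l) : x ∈ KS k (Finset.univ : Finset (Fin l)) := by
  obtain ⟨p, q, hq, rfl⟩ := IsFractionRing.div_surjective (A := MvPolynomial (Fin l) k) x
  exact div_mem (alg_mem_KS_univ p) (alg_mem_KS_univ q)

lemma hom_eq_on {L : Type} [Field L] {S : Finset (Fin l)} (f g : RF k l →+* L)
    (h1 : ∀ c, f (algebraMap k (RF k l) c) = g (algebraMap k (RF k l) c))
    (h2 : ∀ i ∈ S, f (zv i) = g (zv i)) {x : RF k l} (hx : x ∈ KS k S) : f x = g x :=
  KS_le (T := f.eqLocusField g) h1 h2 hx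

lemma deriv_zero_on {L : Type} [Field L] {S : Finset (Fin l)} (φ : RF k l →+* L)
    (d : RF k l →+ L) (hd : ∀ a b, d (a * b) = φ a * d b + φ b * d a)
    (h1 : ∀ c, d (algebraMap k (RF k l) c) = 0)
    (h2 : ∀ i ∈ S, d (zv i) = 0) {x : RF k l} (hx : x ∈ KS k S) : d x = 0 := by
  refine KS_le (T :=
    { carrier := {x | d x = 0}
      zero_mem' := map_zero d
      one_mem' := by simpa using h1 1
      add_mem' := fun {a b} ha hb => by
        change d (a + b) = 0
        rw [map_add, show d a = 0 from ha, show d b = 0 from hb, add_zero]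
      neg_mem' := fun {a} ha => by
        change d (-a) = 0
        rw [map_neg, show d a = 0 from ha, neg_zero]
      mul_mem' := fun {a b} ha hb => by
        change d (a * b) = 0
        rw [hd, show d a = 0 from ha, show d b = 0 from hb]; simp
      inv_mem' := fun a ha => by
        change d a⁻¹ = 0
        by_cases h0 : a = 0
        · rw [h0]; simp
        have h := hd a a⁻¹
        rw [mul_inv_cancel₀ h0, show d a = 0 from ha, mul_zero, add_zero,
          show (d 1 = 0) by simpa using h1 1] at h
        have h3 : φ a ≠ 0 := by simpa using h0
        exact (mul_eq_zero.1 h.symm).resolve_left h3 }) h1 h2 hx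

/-- The expansion as a Laurent series in `t` -/
def EL (J : Finset (Fin l)) : RF k l →+* LaurentSeries (RF k l) :=
  r2l.comp (scaleJ J)

lemma component_eq (J : Finset (Fin l)) (n : ℤ) (x : RF k l) :
    component J (fun _ => 2) n x = (EL J x).coeff (n - 2 * J.card) := by
  unfold component
  rw [lcoeff_eq]
  simp [EL, mul_comm]

lemma scaleJ_alg (J : Finset (Fin l)) (p : MvPolynomial (Fin l) k) :
    scaleJ J (algebraMap (MvPolynomial (Fin l) k) (RF k l) p) =
      toRatFuncHom k l (scaleAux k l J p) := by
  exact IsFractionRing.lift_algebraMap (g := (toRatFuncHom k l).comp (scaleAux k l J))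
    (fun a b hab => scaleAux_injective J (toRatFuncHom_injective hab)) p

lemma EL_const (J : Finset (Fin l)) (c : k) : EL J (algebraMap k (RF k l) c) =
    HahnSeries.C (algebraMap k (RF k l) c) := by
  rw [← alg_C]
  simp only [EL, RingHom.comp_apply, scaleJ_alg]
  simp [scaleAux, toRatFuncHom, r2l_C, MvPolynomial.algebraMap_eq]

lemma EL_zv (J : Finset (Fin l)) (i : Fin l) : EL J (zv i : RF k l) =
    HahnSeries.single (if i ∈ J then 1 else 0) (zv i) := by
  conv_lhs => rw [zv]
  simp only [EL, RingHom.comp_apply, scaleJ_alg]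
  by_cases hi : i ∈ J
  · simp [scaleAux, toRatFuncHom, r2l_C, hi, r2l_X, HahnSeries.C_apply, zv]
  · simp [scaleAux, toRatFuncHom, r2l_C, hi, HahnSeries.C_apply, zv]

lemma EL_smul (J : Finset (Fin l)) (c : k) (x : RF k l) :
    EL J (c • x) = HahnSeries.C (algebraMap k (RF k l) c) * EL J x := by
  rw [Algebra.smul_def, map_mul, EL_const]

lemma EL_inter {J J' S : Finset (Fin l)} (h : ∀ i ∈ S, (i ∈ J ↔ i ∈ J')) {x : RF k l}
    (hx : x ∈ KS k S) : EL J x = EL J' x := by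
  apply hom_eq_on (S := S) _ _ _ _ hx
  · intro c; rw [EL_const, EL_const]
  · intro i hi; rw [EL_zv, EL_zv]; simp [h i hi]

lemma EL_disj {J S : Finset (Fin l)} (h : ∀ i ∈ S, i ∉ J) {x : RF k l}
    (hx : x ∈ KS k S) : EL J x = HahnSeries.C x := by
  apply hom_eq_on (S := S) (EL J) HahnSeries.C _ _ hx
  · intro c; rw [EL_const]
  · intro i hi; rw [EL_zv]; simp [h i hi, HahnSeries.C_apply]

lemma EL_coeff_mem {J S : Finset (Fin l)} {x : RF k l}
    (hx : x ∈ KS k S) (n : ℤ) : (EL J x).coeff n ∈ KS k S := by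
  have : x ∈ ((lsmap (KS k S).subtype).fieldRange).comap (EL J) := by
    refine KS_le ?_ ?_ hx
    · intro c
      rw [Subfield.mem_comap, EL_const]
      exact ⟨HahnSeries.C ⟨_, const_mem_KS S c⟩, lsmap_C _ _⟩
    · intro i hi
      rw [Subfield.mem_comap, EL_zv]
      exact ⟨HahnSeries.single _ ⟨_, zv_mem_KS hi⟩, lsmap_single _ _ _⟩
  obtain ⟨f, hf⟩ := this
  rw [← hf, lsmap_coeff]
  exact (f.coeff n).2

lemma evalone (J : Finset (Fin l)) (p : MvPolynomial (Fin l) k) :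
    (scaleAux k l J p).eval 1 = p := by
  have h : (Polynomial.evalRingHom (1 : MvPolynomial (Fin l) k)).comp (scaleAux k l J)
      = RingHom.id _ := by
    apply MvPolynomial.ringHom_ext
    · intro r; simp [scaleAux]
    · intro i; by_cases hi : i ∈ J <;> simp [scaleAux, hi]
  exact DFunLike.congr_fun h p

lemma EL_single_eq {J : Finset (Fin l)} {x y : RF k l} {n : ℤ}
    (h : EL J x = HahnSeries.single n y) : y = x := by
  have h1 : scaleJ J x = RatFunc.X ^ n * RatFunc.C y := by
    apply (r2l (L := RF k l)).injective
    change EL J x = _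
    rw [h, r2l_mono]
  obtain ⟨a, b, rfl⟩ : ∃ a b : ℕ, n = (a : ℤ) - b := ⟨n.toNat, (-n).toNat, by omega⟩
  rw [zpow_sub₀ RatFunc.X_ne_zero, zpow_natCast, zpow_natCast] at h1
  obtain ⟨p, q, hq, rfl⟩ := IsFractionRing.div_surjective (A := MvPolynomial (Fin l) k) x
  have hq0 : q ≠ 0 := nonZeroDivisors.ne_zero hq
  have hq1 : toRatFuncHom k l (scaleAux k l J q) ≠ 0 := by
    rw [Ne, map_eq_zero_iff _ toRatFuncHom_injective, map_eq_zero_iff _ (scaleAux_injective J)]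
    exact hq0
  rw [map_div₀, scaleJ_alg, scaleJ_alg] at h1
  have hX : (RatFunc.X : RatFunc (RF k l)) ≠ 0 := RatFunc.X_ne_zero
  field_simp at h1
  have h2 : (algebraMap (Polynomial (RF k l)) (RatFunc (RF k l)))
      (((scaleAux k l J p).map (algebraMap (MvPolynomial (Fin l) k) (RF k l))) * Polynomial.X ^ b) =
      (algebraMap (Polynomial (RF k l)) (RatFunc (RF k l)))
      (Polynomial.C y * Polynomial.X ^ a *
        ((scaleAux k l J q).map (algebraMap (MvPolynomial (Fin l) k) (RF k l)))) := by
    simp only [map_mul, map_pow, RatFunc.algebraMap_X, RatFunc.algebraMap_C]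
    simp only [toRatFuncHom, RingHom.comp_apply, Polynomial.coe_mapRingHom] at h1
    linear_combination h1
  have h3 := congrArg (Polynomial.eval 1) (IsFractionRing.injective _ _ h2)
  have e1 : ∀ r : MvPolynomial (Fin l) k, ((scaleAux k l J r).map
      (algebraMap (MvPolynomial (Fin l) k) (RF k l))).eval 1 = algebraMap _ _ r := by
    intro r
    rw [Polynomial.eval_map, show (1 : RF k l) = algebraMap (MvPolynomial (Fin l) k) _ 1 by simp,
      Polynomial.eval₂_at_apply, evalone]
  simp only [Polynomial.eval_mul, e1, Polynomial.eval_pow, Polynomial.eval_X, one_pow, mul_one,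
    Polynomial.eval_C] at h3
  rw [h3]
  have : algebraMap (MvPolynomial (Fin l) k) (RF k l) q ≠ 0 := by
    simpa using hq0
  field_simp

lemma homog_iff (S : Finset (Fin l)) (d : ℤ) (x : RF k l) :
    IsHomogeneousOn S d x ↔ EL S x = HahnSeries.single d x := by
  unfold IsHomogeneousOn
  rw [← (r2l (L := RF k l)).injective.eq_iff, r2l_mono]
  simp [EL]

section Der
variable {D : Fin l → Derivation k (RF k l) (RF k l)} (hD : IsPartialDeriv D)
include hD

lemma D_zero {S : Finset (Fin l)} {i : Fin l} (hi : i ∉ S) {x : RF k l} (hx : x ∈ KS k S) :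
    D i x = 0 := by
  apply deriv_zero_on (S := S) (RingHom.id _) (D i).toLinearMap.toAddMonoidHom _ _ _ hx
  · intro a b; simp
  · intro c; simp
  · intro j hj
    change D i (zv j) = 0
    rw [hD, if_neg (by rintro rfl; exact hi hj)]

lemma D_mem {S : Finset (Fin l)} (i : Fin l) {x : RF k l} (hx : x ∈ KS k S) :
    D i x ∈ KS k S := by
  have : KS k S ≤ 
    { carrier := {x | x ∈ KS k S ∧ D i x ∈ KS k S}
      zero_mem' := by simp
      one_mem' := by simp
      add_mem' := fun {a b} ha hb => ⟨add_mem ha.1 hb.1, by rw [map_add]; exact add_mem ha.2 hb.2⟩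
      neg_mem' := fun {a} ha => ⟨neg_mem ha.1, by rw [map_neg]; exact neg_mem ha.2⟩
      mul_mem' := fun {a b} ha hb => ⟨mul_mem ha.1 hb.1, by
        rw [Derivation.leibniz]; exact add_mem (mul_mem ha.1 hb.2) (mul_mem hb.1 ha.2)⟩
      inv_mem' := fun a ha => ⟨inv_mem ha.1, by
        rw [Derivation.leibniz_inv]
        exact mul_mem (neg_mem (pow_mem (inv_mem ha.1) 2)) ha.2⟩ } := by
    apply KS_le
    · intro c; exact ⟨const_mem_KS S c, by simp⟩
    · intro j hj
      refine ⟨zv_mem_KS hj, ?_⟩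
      rw [hD]; split_ifs <;> simp
  exact (this hx).2

lemma EL_D (J : Finset (Fin l)) (i : Fin l) (x : RF k l) :
    lsop 0 (D i) (EL J x) = HahnSeries.single (if i ∈ J then 1 else 0) 1 * EL J (D i x) := by
  rw [← sub_eq_zero]
  refine deriv_zero_on (S := Finset.univ) (EL J)
    { toFun := fun x => lsop 0 (D i) (EL J x) -
        HahnSeries.single (if i ∈ J then 1 else 0) 1 * EL J (D i x)
      map_zero' := by simp
      map_add' := fun a b => by simp; ring } ?_ ?_ ?_ (mem_KS_univ x)
  · intro a b
    simp only [AddMonoidHom.coe_mk, ZeroHom.coe_mk, map_mul, lsop_mul, Derivation.leibniz,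
      smul_eq_mul, map_add]
    ring
  · intro c
    simp only [AddMonoidHom.coe_mk, ZeroHom.coe_mk, EL_const, lsop_C]
    simp
  · intro j _
    simp only [AddMonoidHom.coe_mk, ZeroHom.coe_mk, EL_zv, lsop_single, hD j]
    rw [hD]
    by_cases hij : j = i
    · subst hij
      by_cases hj : j ∈ J <;> simp [hj]
    · simp [hij]

lemma EL_Eul (J : Finset (Fin l)) (x : RF k l) :
    lsop 1 (0 : Derivation k (RF k l) (RF k l)) (EL J x) = EL J (∑ j ∈ J, zv j * D j x) := by
  rw [← sub_eq_zero]
  refine deriv_zero_on (S := Finset.univ) (EL J)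
    { toFun := fun x => lsop 1 (0 : Derivation k (RF k l) (RF k l)) (EL J x) -
        EL J (∑ j ∈ J, zv j * D j x)
      map_zero' := by simp
      map_add' := fun a b => by
        simp only [map_add, mul_add, Finset.sum_add_distrib]; ring } ?_ ?_ ?_ (mem_KS_univ x)
  · intro a b
    simp only [AddMonoidHom.coe_mk, ZeroHom.coe_mk, map_mul, lsop_mul, Derivation.leibniz,
      smul_eq_mul]
    have : ∑ j ∈ J, zv j * (a * (D j) b + b * (D j) a) =
      a * (∑ j ∈ J, zv j * (D j) b) + b * (∑ j ∈ J, zv j * (D j) a) := by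
      rw [Finset.mul_sum, Finset.mul_sum, ← Finset.sum_add_distrib]
      apply Finset.sum_congr rfl; intros; ring
    rw [this, map_add, map_mul, map_mul]
    ring
  · intro c
    simp only [AddMonoidHom.coe_mk, ZeroHom.coe_mk, EL_const, lsop_C]
    simp
  · intro j _
    have : ∑ i ∈ J, (zv i : RF k l) * D i (zv j) = if j ∈ J then zv j else 0 := by
      rw [← Finset.sum_ite_eq J j (fun i => (zv i : RF k l))]
      apply Finset.sum_congr rfl
      intro i _
      rw [hD]; split_ifs <;> simp
    simp only [AddMonoidHom.coe_mk, ZeroHom.coe_mk, this, EL_zv, lsop_single]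
    by_cases hj : j ∈ J <;> simp [hj, EL_zv]

lemma coeff_D_mem {J : Finset (Fin l)} {i : Fin l} (hi : i ∈ J) (x : RF k l) (n : ℤ) :
    (EL J (D i x)).coeff n = D i ((EL J x).coeff (n + 1)) := by
  have := congrArg (fun f => f.coeff (n + 1)) (EL_D hD J i x)
  simp only [lsop_coeff, if_pos hi, zero_mul, zero_add] at this
  rw [this, HahnSeries.coeff_single_mul_add, one_mul]

lemma coeff_D_notMem {J : Finset (Fin l)} {i : Fin l} (hi : i ∉ J) (x : RF k l) (n : ℤ) :
    (EL J (D i x)).coeff n = D i ((EL J x).coeff n) := by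
  have := congrArg (fun f => f.coeff n) (EL_D hD J i x)
  simp only [lsop_coeff, if_neg hi, zero_mul, zero_add] at this
  rw [this]
  simp 

end Der
end Fld

section PD
variable {k : Type} [Field k] [CharZero k] {l : ℕ}

lemma pd_deg {j : Fin l} {q : MvPolynomial (Fin l) k} (h : q ∣ MvPolynomial.pderiv j q) :
    MvPolynomial.pderiv j q = 0 := by
  by_contra h0
  obtain ⟨r, hr⟩ := h
  have hq : q ≠ 0 := by rintro rfl; simp at h0
  have hr0 : r ≠ 0 := by rintro rfl; simp [hr] at h0
  have h1 : MvPolynomial.degreeOf j q ≤ MvPolynomial.degreeOf j (MvPolynomial.pderiv j q) := by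
    rw [hr, MvPolynomial.degreeOf_mul_eq hq hr0]; omega
  have h2 : ∀ m ∈ (MvPolynomial.pderiv j q).support, m j + 1 ≤ MvPolynomial.degreeOf j q := by
    intro m hm
    rw [MvPolynomial.mem_support_iff, MvPolynomial.coeff_pderiv] at hm
    have := MvPolynomial.degreeOf_le_iff.1 (le_refl (MvPolynomial.degreeOf j q))
      (m + Finsupp.single j 1) (MvPolynomial.mem_support_iff.2 (fun h => hm (by rw [h]; simp)))
    simpa using this
  obtain ⟨m, hm⟩ := MvPolynomial.support_nonempty.2 h0
  have h3 : MvPolynomial.degreeOf j (MvPolynomial.pderiv j q) < MvPolynomial.degreeOf j q := by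
    rw [MvPolynomial.degreeOf_lt_iff (by have := h2 m hm; omega)]
    intro m hm; have := h2 m hm; omega
  omega

lemma pd_vars {j : Fin l} {q : MvPolynomial (Fin l) k} (h : MvPolynomial.pderiv j q = 0) :
    j ∉ q.vars := by
  intro hj
  rw [MvPolynomial.mem_vars_iff_mem_support] at hj
  obtain ⟨d, hd, hjd⟩ := hj
  have h1 := MvPolynomial.coeff_pderiv (i := j) q (d - Finsupp.single j 1)
  have h2 : d - Finsupp.single j 1 + Finsupp.single j 1 = d := by
    apply tsub_add_cancel_of_le
    rw [Finsupp.single_le_iff]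
    have := Finsupp.mem_support_iff.1 hjd
    omega
  rw [h2, h] at h1
  simp only [MvPolynomial.coeff_zero] at h1
  rcases mul_eq_zero.1 h1.symm with h3 | h3
  · exact MvPolynomial.mem_support_iff.1 hd h3
  · exact Nat.cast_add_one_ne_zero _ h3

lemma alg_supp {S : Finset (Fin l)} {p : MvPolynomial (Fin l) k} (h : ∀ j ∉ S, j ∉ p.vars) :
    algebraMap (MvPolynomial (Fin l) k) (RF k l) p ∈ KS k S := by
  have h1 : p ∈ MvPolynomial.supported k (S : Set (Fin l)) := by
    rw [MvPolynomial.mem_supported]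
    intro j hj
    by_contra hS
    exact h j hS hj
  rw [MvPolynomial.supported_eq_adjoin_X] at h1
  clear h
  induction h1 using Algebra.adjoin_induction with
  | mem x hx => obtain ⟨i, hi, rfl⟩ := hx; exact zv_mem_KS hi
  | algebraMap c => rw [MvPolynomial.algebraMap_eq, alg_C]; exact const_mem_KS S c
  | add x y _ _ hx hy => rw [map_add]; exact add_mem hx hy
  | mul x y _ _ hx hy => rw [map_mul]; exact mul_mem hx hy

lemma der_ext {d e : Derivation k (RF k l) (RF k l)} (h : ∀ i, d (zv i) = e (zv i)) : d = e := by
  ext x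
  rw [← sub_eq_zero]
  refine deriv_zero_on (S := Finset.univ) (RingHom.id _) (d - e).toLinearMap.toAddMonoidHom
    ?_ ?_ ?_ (mem_KS_univ x)
  · intro a b
    change (d - e) (a * b) = _
    rw [Derivation.leibniz]; rfl
  · intro c
    change (d - e) _ = 0
    simp
  · intro i _
    change (d - e) _ = 0
    simp [h i]

variable {D : Fin l → Derivation k (RF k l) (RF k l)} (hD : IsPartialDeriv D)
include hD

lemma D_alg (j : Fin l) (p : MvPolynomial (Fin l) k) :
    D j (algebraMap (MvPolynomial (Fin l) k) (RF k l) p) =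
      algebraMap (MvPolynomial (Fin l) k) (RF k l) (MvPolynomial.pderiv j p) := by
  induction p using MvPolynomial.induction_on with
  | C c => rw [alg_C]; simp
  | add p q hp hq => rw [map_add, map_add, hp, hq, map_add, map_add]
  | mul_X p i hp =>
    rw [map_mul, Derivation.leibniz, hp, Derivation.leibniz]
    have : algebraMap (MvPolynomial (Fin l) k) (RF k l) (MvPolynomial.X i) = zv i := rfl
    rw [this, hD]
    by_cases h : i = j
    · subst h; simp [this]
    · simp [h, this, MvPolynomial.pderiv_X_of_ne h]

lemma mem_KS_iff {S : Finset (Fin l)} {x : RF k l} : x ∈ KS k S ↔ ∀ j ∉ S, D j x = 0 := by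
  refine ⟨fun hx j hj => D_zero hD hj hx, fun h => ?_⟩
  obtain ⟨p, q, hrel, hx⟩ := IsFractionRing.exists_reduced_fraction (MvPolynomial (Fin l) k) x
  have hq0 : algebraMap (MvPolynomial (Fin l) k) (RF k l) q ≠ 0 := by
    simpa using nonZeroDivisors.coe_ne_zero q
  have hx1 : x * algebraMap (MvPolynomial (Fin l) k) (RF k l) q = algebraMap _ _ p := by
    rw [← hx, IsLocalization.mk'_spec]
  have key : ∀ j ∉ S, j ∉ p.vars ∧ j ∉ (q : MvPolynomial (Fin l) k).vars := by
    intro j hj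
    have h1 := congrArg (D j) hx1
    rw [Derivation.leibniz, h j hj, D_alg hD, D_alg hD] at h1
    simp only [smul_eq_mul, mul_zero, add_zero] at h1
    have h2 : p * MvPolynomial.pderiv j (q : MvPolynomial (Fin l) k) =
        q * MvPolynomial.pderiv j p := by
      apply IsFractionRing.injective (MvPolynomial (Fin l) k) (RF k l)
      rw [map_mul, map_mul, ← h1, ← hx1]; ring
    have h3 : MvPolynomial.pderiv j (q : MvPolynomial (Fin l) k) = 0 := by
      apply pd_deg
      exact hrel.symm.dvd_of_dvd_mul_left ⟨_, h2⟩
    have h4 : MvPolynomial.pderiv j p = 0 := by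
      rw [h3, mul_zero] at h2
      exact (mul_eq_zero.1 h2.symm).resolve_left (nonZeroDivisors.coe_ne_zero q)
    exact ⟨pd_vars h4, pd_vars h3⟩
  have h5 : x = algebraMap _ _ p / algebraMap (MvPolynomial (Fin l) k) (RF k l) q := by
    rw [eq_div_iff hq0, hx1]
  rw [h5]
  exact div_mem (alg_supp fun j hj => (key j hj).1) (alg_supp fun j hj => (key j hj).2)

lemma const_of_D {x : RF k l} (h : ∀ j, D j x = 0) : ∃ c, x = algebraMap k (RF k l) c := by
  have h1 : x ∈ KS k (∅ : Finset (Fin l)) := (mem_KS_iff hD).2 (fun j _ => h j)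
  have : KS k (∅ : Finset (Fin l)) ≤ (algebraMap k (RF k l)).fieldRange :=
    KS_le (fun c => ⟨c, rfl⟩) (by simp)
  obtain ⟨c, hc⟩ := this h1
  exact ⟨c, hc.symm⟩

/-- linear disjointness -/
lemma lin_disj {I J : Finset (Fin l)} (hIJ : Disjoint I J) {ι : Type} (b : ι → RF k l)
    (hb : LinearIndependent k b) (hbJ : ∀ i, b i ∈ KS k J) (s : Finset ι) :
    ∀ c : ι → RF k l, (∀ i ∈ s, c i ∈ KS k I) → ∑ i ∈ s, c i * b i = 0 → ∀ i ∈ s, c i = 0 := by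
  induction s using Finset.induction_on with
  | empty => intro c _ _ i hi; simp at hi
  | insert a s ha ih =>
    intro c hc h0
    have hca : c a = 0 := by
      by_contra hne
      let c' : ι → RF k l := fun i => c i / c a
      have hc' : ∀ i ∈ insert a s, c' i ∈ KS k I := fun i hi =>
        div_mem (hc i hi) (hc a (Finset.mem_insert_self a s))
      have h1 : b a + ∑ i ∈ s, c' i * b i = 0 := by
        have : b a + ∑ i ∈ s, c' i * b i = (∑ i ∈ insert a s, c i * b i) / c a := by
          rw [Finset.sum_insert ha, add_div, mul_div_assoc, mul_div_cancel₀ _ hne, Finset.sum_div]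
          congr 1
          apply Finset.sum_congr rfl; intro i _; simp only [c']; ring
        rw [this, h0, zero_div]
      have h2 : ∀ j, ∀ i ∈ s, D j (c' i) = 0 := by
        intro j
        by_cases hj : j ∈ I
        · have hjJ : j ∉ J := Finset.disjoint_left.1 hIJ hj
          apply ih (fun i => D j (c' i)) (fun i hi => D_mem hD j (hc' i (Finset.mem_insert_of_mem hi)))
          have := congrArg (D j) h1
          rw [map_add, map_zero, D_zero hD hjJ (hbJ a), zero_add, map_sum] at this
          rw [← this]
          apply Finset.sum_congr rfl
          intro i _
          rw [Derivation.leibniz, D_zero hD hjJ (hbJ i)]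
          simp [mul_comm]
        · intro i hi
          exact D_zero hD hj (hc' i (Finset.mem_insert_of_mem hi))
      have h3 : ∀ i, ∃ r : k, i ∈ s → c' i = algebraMap k (RF k l) r := by
        intro i
        by_cases hi : i ∈ s
        · obtain ⟨r, hr⟩ := const_of_D hD (fun j => h2 j i hi)
          exact ⟨r, fun _ => hr⟩
        · exact ⟨0, fun h => absurd h hi⟩
      choose r hr using h3
      have h4 : ∑ i ∈ insert a s, (if i = a then 1 else r i) • b i = 0 := by
        rw [Finset.sum_insert ha, if_pos rfl, one_smul, ← h1]
        congr 1
        apply Finset.sum_congr rfl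
        intro i hi
        rw [if_neg (by rintro rfl; exact ha hi), hr i hi, Algebra.smul_def]
      have := linearIndependent_iff'.1 hb (insert a s) _ h4 a (Finset.mem_insert_self a s)
      simp at this
    intro i hi
    rw [Finset.sum_insert ha, hca, zero_mul, zero_add] at h0
    rcases Finset.mem_insert.1 hi with rfl | hi
    · exact hca
    · exact ih c (fun i hi => hc i (Finset.mem_insert_of_mem hi)) h0 i hi

lemma slice {I J : Finset (Fin l)} (hIJ : Disjoint I J) {κ : Type} (U V W : Submodule k (RF k l))
    (hU : ∀ u ∈ U, u ∈ KS k I) (L : κ → RF k l →+ RF k l) (L' : κ → RF k l → RF k l)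
    (hL : ∀ a, ∀ u ∈ U, ∀ v ∈ V, L a (u * v) = u * L' a v)
    (hL' : ∀ a, ∀ v ∈ V, L' a v ∈ KS k J)
    (hW : ∀ v ∈ V, (∀ a, L' a v = 0) → v ∈ W) {x : RF k l} (hx : x ∈ U * V)
    (h0 : ∀ a, L a x = 0) : x ∈ U * W := by
  let b := Module.Free.chooseBasis k U
  have h1 : ∃ f : Module.Free.ChooseBasisIndex k U →₀ V, x = f.sum (fun i v => (b i : RF k l) * v) := by
    clear h0
    induction hx using Submodule.mul_induction_on' with
    | mem_mul_mem u hu v hv =>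
      refine ⟨(b.repr ⟨u, hu⟩).mapRange (fun c => c • (⟨v, hv⟩ : V)) (by simp), ?_⟩
      rw [Finsupp.sum_mapRange_index (by simp)]
      have h2 := congrArg (Submodule.subtype U) (b.linearCombination_repr ⟨u, hu⟩)
      rw [Finsupp.linearCombination_apply, Finsupp.sum, map_sum] at h2
      have h3 : u = ∑ i ∈ (b.repr ⟨u, hu⟩).support, (b.repr ⟨u, hu⟩) i • (b i : RF k l) := h2.symm
      conv_lhs => rw [h3]
      rw [Finsupp.sum, Finset.sum_mul]
      apply Finset.sum_congr rfl
      intro i _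
      simp
    | add x _ y _ hx hy =>
      obtain ⟨f, hf⟩ := hx
      obtain ⟨g, hg⟩ := hy
      refine ⟨f + g, ?_⟩
      rw [Finsupp.sum_add_index' (by simp) (by intros; simp; ring), ← hf, ← hg]
  obtain ⟨f, rfl⟩ := h1
  apply Submodule.sum_mem
  intro i hi
  refine Submodule.mul_mem_mul (b i).2 (hW _ (f i).2 ?_)
  intro a
  have h2 := h0 a
  rw [Finsupp.sum, map_sum] at h2
  have hli : LinearIndependent k (fun i => (b i : RF k l)) :=
    b.linearIndependent.map' U.subtype (Submodule.ker_subtype U)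
  refine lin_disj hD hIJ.symm (fun i => (b i : RF k l)) hli (fun i => hU _ (b i).2) f.support
    (fun i => L' a (f i)) (fun i _ => hL' a _ (f i).2) ?_ i hi
  rw [← h2]
  apply Finset.sum_congr rfl
  intro i _
  rw [hL a _ (b i).2 _ (f i).2, mul_comm]

end PD

section Phis
variable {k : Type} [Field k] {l : ℕ}

/-- `Φ` as a subalgebra -/
def PhiA (k : Type) [Field k] (l : ℕ) : Subalgebra k (RF k l) :=
  Algebra.adjoin k (Set.range zv ∪ {x | ∃ i j, x = (zv i - zv j)⁻¹})

/-- `Φ` with poles at zero allowed -/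
def AA (k : Type) [Field k] (l : ℕ) : Subalgebra k (RF k l) :=
  Algebra.adjoin k (Set.range zv ∪ {x | ∃ i j, x = (zv i - zv j)⁻¹} ∪ {x | ∃ i, x = (zv i)⁻¹})

/-- `KS` as a subalgebra -/
def KSA (k : Type) [Field k] {l : ℕ} (S : Finset (Fin l)) : Subalgebra k (RF k l) :=
  { carrier := {x | x ∈ KS k S}
    mul_mem' := fun ha hb => (KS k S).mul_mem ha hb
    add_mem' := fun ha hb => (KS k S).add_mem ha hb
    algebraMap_mem' := const_mem_KS S }

lemma mem_KSA {S : Finset (Fin l)} {x : RF k l} : x ∈ KSA k S ↔ x ∈ KS k S := Iff.rfl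

/-- elements whose denominator divides a power of `w` -/
def clr (w : MvPolynomial (Fin l) k) : Subalgebra k (RF k l) :=
  { carrier := {x | ∃ (N : ℕ) (p : MvPolynomial (Fin l) k),
      x * (algebraMap (MvPolynomial (Fin l) k) (RF k l) w) ^ N = algebraMap _ _ p}
    mul_mem' := by
      rintro a b ⟨N, p, hp⟩ ⟨M, q, hq⟩
      refine ⟨N + M, p * q, ?_⟩
      rw [map_mul, ← hp, ← hq]; ring
    add_mem' := by
      rintro a b ⟨N, p, hp⟩ ⟨M, q, hq⟩
      refine ⟨N + M, p * w ^ M + q * w ^ N, ?_⟩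
      rw [map_add, map_mul, map_mul, map_pow, map_pow, ← hp, ← hq]; ring
    algebraMap_mem' := fun c => ⟨0, MvPolynomial.C c, by rw [alg_C]; simp⟩ }

lemma clr_alg (w p : MvPolynomial (Fin l) k) :
    algebraMap (MvPolynomial (Fin l) k) (RF k l) p ∈ clr w := ⟨0, p, by simp⟩

lemma clr_inv {w f : MvPolynomial (Fin l) k} (h : f ∣ w) :
    (algebraMap (MvPolynomial (Fin l) k) (RF k l) f)⁻¹ ∈ clr w := by
  obtain ⟨r, rfl⟩ := h
  by_cases h0 : algebraMap (MvPolynomial (Fin l) k) (RF k l) f = 0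
  · rw [h0, inv_zero]; exact zero_mem _
  · refine ⟨1, r, ?_⟩
    rw [map_mul, pow_one, inv_mul_cancel_left₀ h0]

/-- Vandermonde -/
def vd (k : Type) [Field k] (l : ℕ) : MvPolynomial (Fin l) k :=
  ∏ i : Fin l, ∏ j : Fin l, (if i < j then (MvPolynomial.X i - MvPolynomial.X j) else 1)

lemma alg_sub (i j : Fin l) : algebraMap (MvPolynomial (Fin l) k) (RF k l)
    (MvPolynomial.X i - MvPolynomial.X j) = zv i - zv j := by rw [map_sub]; rfl

lemma zv_inj {i j : Fin l} (h : i ≠ j) : (zv i : RF k l) - zv j ≠ 0 := by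
  rw [sub_ne_zero]
  intro h1
  exact h (MvPolynomial.X_injective (IsFractionRing.injective (MvPolynomial (Fin l) k) (RF k l) h1))

lemma zv_ne (i : Fin l) : (zv i : RF k l) ≠ 0 := by
  unfold zv
  simp

lemma vd_dvd {i j : Fin l} (h : i ≠ j) :
    (MvPolynomial.X i - MvPolynomial.X j : MvPolynomial (Fin l) k) ∣ vd k l := by
  have key : ∀ i j : Fin l, i < j →
      (MvPolynomial.X i - MvPolynomial.X j : MvPolynomial (Fin l) k) ∣ vd k l := by
    intro i j hij
    refine dvd_trans ?_ (Finset.dvd_prod_of_mem _ (Finset.mem_univ i))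
    refine dvd_trans ?_ (Finset.dvd_prod_of_mem _ (Finset.mem_univ j))
    rw [if_pos hij]
  rcases lt_or_gt_of_ne h with h | h
  · exact key i j h
  · rw [← neg_sub, neg_dvd]; exact key j i h

lemma vd_ne : algebraMap (MvPolynomial (Fin l) k) (RF k l) (vd k l) ≠ 0 := by
  unfold vd
  rw [map_prod, Finset.prod_ne_zero_iff]
  intro i _
  rw [map_prod, Finset.prod_ne_zero_iff]
  intro j _
  split_ifs with h
  · rw [alg_sub]; exact zv_inj h.ne
  · simp

lemma PhiA_clr {w : MvPolynomial (Fin l) k} (h : vd k l ∣ w) : PhiA k l ≤ clr w := by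
  apply Algebra.adjoin_le
  rintro x (⟨i, rfl⟩ | ⟨i, j, rfl⟩)
  · exact clr_alg w (MvPolynomial.X i)
  · by_cases hij : i = j
    · subst hij; simp
    · rw [← alg_sub]; exact clr_inv ((vd_dvd hij).trans h)

lemma AA_clr {w : MvPolynomial (Fin l) k} (h : vd k l ∣ w) (h' : ∀ i, MvPolynomial.X i ∣ w) :
    AA k l ≤ clr w := by
  apply Algebra.adjoin_le
  rintro x ((⟨i, rfl⟩ | ⟨i, j, rfl⟩) | ⟨i, rfl⟩)
  · exact clr_alg w (MvPolynomial.X i)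
  · by_cases hij : i = j
    · subst hij; simp
    · rw [← alg_sub]; exact clr_inv ((vd_dvd hij).trans h)
  · exact clr_inv (h' i)

lemma zv_PhiA (i : Fin l) : zv i ∈ PhiA k l := Algebra.subset_adjoin (Or.inl ⟨i, rfl⟩)
lemma inv_PhiA (i j : Fin l) : (zv i - zv j)⁻¹ ∈ PhiA k l :=
  Algebra.subset_adjoin (Or.inr ⟨i, j, rfl⟩)

lemma PhiA_le_AA : PhiA k l ≤ AA k l := Algebra.adjoin_mono Set.subset_union_left

lemma alg_PhiA (p : MvPolynomial (Fin l) k) :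
    algebraMap (MvPolynomial (Fin l) k) (RF k l) p ∈ PhiA k l := by
  induction p using MvPolynomial.induction_on with
  | C c => rw [alg_C]; exact Subalgebra.algebraMap_mem _ c
  | add p q hp hq => rw [map_add]; exact add_mem hp hq
  | mul_X p i hp => rw [map_mul]; exact mul_mem hp (zv_PhiA i)

lemma Phi_of_clr {x : RF k l} (h : x ∈ clr (vd k l)) : x ∈ Phi k l := by
  obtain ⟨N, p, hp⟩ := h
  refine ⟨p, fun _ _ => -(N : ℤ), ?_⟩
  rw [← hp]
  have : (∏ i : Fin l, ∏ j : Fin l, (if i < j then ((zv i : RF k l) - zv j) ^ (-(N : ℤ)) else 1)) =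
      ((algebraMap (MvPolynomial (Fin l) k) (RF k l) (vd k l)) ^ N)⁻¹ := by
    unfold vd
    rw [map_prod, ← Finset.prod_pow, ← Finset.prod_inv_distrib]
    apply Finset.prod_congr rfl; intro i _
    rw [map_prod, ← Finset.prod_pow, ← Finset.prod_inv_distrib]
    apply Finset.prod_congr rfl; intro j _
    split_ifs
    · rw [alg_sub, zpow_neg, zpow_natCast]
    · simp
  rw [this, mul_inv_cancel_right₀ (pow_ne_zero _ vd_ne)]

lemma mem_Phi {x : RF k l} : x ∈ Phi k l ↔ x ∈ PhiA k l := by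
  constructor
  · rintro ⟨p, e, rfl⟩
    refine mul_mem (alg_PhiA p) (prod_mem fun i _ => prod_mem fun j _ => ?_)
    split_ifs
    · rcases e i j with n | n
      · simp only [Int.ofNat_eq_natCast, zpow_natCast]
        exact pow_mem (sub_mem (zv_PhiA i) (zv_PhiA j)) n
      · rw [zpow_negSucc, ← inv_pow]
        exact pow_mem (inv_PhiA i j) _
    · exact one_mem _
  · intro h
    exact Phi_of_clr (PhiA_clr dvd_rfl h)

/-- Nested expansions commute -/
lemma nested {J K : Finset (Fin l)} (hJK : J ⊆ K) {x : RF k l} (hx : x ∈ PhiA k l) (n m : ℤ) :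
    (EL J ((EL K x).coeff m)).coeff n = (EL K ((EL J x).coeff n)).coeff m := by
  suffices h : x ∈ XX (EL J) (EL K) from (mem_XX.1 h) n m
  have hz : ∀ i : Fin l, (zv i : RF k l) ∈ XX (EL J) (EL K) := by
    intro i
    rw [mem_XX]
    intro n m
    simp only [EL_zv, HahnSeries.coeff_single]
    split_ifs <;> simp_all [EL_zv, HahnSeries.coeff_single]
  induction hx using Algebra.adjoin_induction with
  | mem x hx =>
    rcases hx with ⟨i, rfl⟩ | ⟨i, j, rfl⟩
    · exact hz i
    · by_cases hij : i = j
      · subst hij; simp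
      have hdc : ∀ (i : Fin l) (n m : ℤ), (EL J ((EL K (zv i : RF k l)).coeff m)).coeff n =
          if n = (if i ∈ J then 1 else 0) ∧ m = (if i ∈ K then 1 else 0) then zv i else 0 := by
        intro i n m
        simp only [EL_zv, HahnSeries.coeff_single]
        by_cases h1 : m = (if i ∈ K then 1 else 0)
        · simp [← h1, EL_zv, HahnSeries.coeff_single]
        · simp [h1]
      refine XX_inv (sub_mem (hz i) (hz j))
        (min (if i ∈ J then 1 else 0) (if j ∈ J then 1 else 0))
        (min (if i ∈ K then 1 else 0) (if j ∈ K then 1 else 0)) ?_ ?_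
      · intro n m h
        rw [map_sub, HahnSeries.coeff_sub, map_sub, HahnSeries.coeff_sub, hdc, hdc, if_neg, if_neg,
          sub_zero]
        · rintro ⟨rfl, rfl⟩; omega
        · rintro ⟨rfl, rfl⟩; omega
      · rw [map_sub, HahnSeries.coeff_sub, map_sub, HahnSeries.coeff_sub, hdc, hdc]
        have hi := @hJK i
        have hj := @hJK j
        have h1 := zv_ne (k := k) i
        have h2 := zv_ne (k := k) j
        have h3 := zv_inj (k := k) hij
        by_cases hiJ : i ∈ J <;> by_cases hjJ : j ∈ J <;> by_cases hiK : i ∈ K <;>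
          by_cases hjK : j ∈ K <;> simp_all
  | algebraMap c =>
    rw [mem_XX]
    intro n m
    simp only [EL_const, HahnSeries.C_apply, HahnSeries.coeff_single]
    split_ifs <;> simp_all [EL_const]
  | add x y _ _ hx hy => exact add_mem hx hy
  | mul x y _ _ hx hy => exact mul_mem hx hy

lemma cross_coeff {J : Finset (Fin l)} {i j : Fin l} (hi : i ∉ J) (hj : j ∈ J)
    (B : Subalgebra k (RF k l)) (h1 : (zv i)⁻¹ ∈ B) (h2 : zv j ∈ B) (n : ℤ) :
    (EL J (zv i - zv j)⁻¹).coeff n ∈ B := by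
  have hij : i ≠ j := by rintro rfl; exact hi hj
  set f := EL J ((zv i : RF k l) - zv j)⁻¹ with hf
  have h0 : EL J ((zv i : RF k l) - zv j) = HahnSeries.C (zv i) - HahnSeries.single 1 (zv j) := by
    rw [map_sub, EL_zv, EL_zv, if_neg hi, if_pos hj]; rfl
  have hlow : ∀ n < 0, f.coeff n = 0 := by
    have h3 : EL J ((zv i : RF k l) - zv j) * f = 1 := by
      rw [hf, ← map_mul, mul_inv_cancel₀ (zv_inj hij), map_one]
    rw [h0] at h3
    refine ls_inv_low _ _ h3 0 ?_ ?_
    · intro n hn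
      rw [HahnSeries.coeff_sub, HahnSeries.C_apply, HahnSeries.coeff_single,
        HahnSeries.coeff_single, if_neg (by omega), if_neg (by omega), sub_zero]
    · rw [HahnSeries.coeff_sub, HahnSeries.C_apply, HahnSeries.coeff_single,
        HahnSeries.coeff_single, if_pos rfl, if_neg (by omega), sub_zero]
      exact zv_ne i
  have hrec : ∀ n, zv i * f.coeff n = zv j * f.coeff (n - 1) + if n = 0 then 1 else 0 := by
    intro n
    have h3 : EL J ((zv i : RF k l) - zv j) * f = 1 := by
      rw [hf, ← map_mul, mul_inv_cancel₀ (zv_inj hij), map_one]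
    rw [h0, sub_mul] at h3
    have h4 := congrArg (fun g => HahnSeries.coeff g n) h3
    simp only [HahnSeries.coeff_sub, HahnSeries.C_mul_eq_smul, HahnSeries.coeff_smul,
      smul_eq_mul, ls_coeff_one] at h4
    have h5 := HahnSeries.coeff_single_mul_add (r := (zv j : RF k l)) (x := f) (a := n - 1) (b := 1)
    rw [sub_add_cancel] at h5
    rw [h5] at h4
    rw [← h4]; ring
  have hrec' : ∀ n, f.coeff n = (zv i)⁻¹ * (zv j * f.coeff (n - 1) + if n = 0 then 1 else 0) := by
    intro n
    rw [← hrec, inv_mul_cancel_left₀ (zv_ne i)]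
  have hnat : ∀ n : ℕ, f.coeff (n : ℤ) ∈ B := by
    intro n
    induction n with
    | zero =>
      rw [hrec', hlow _ (by simp)]
      simpa using h1
    | succ n ih =>
      rw [hrec']
      have : ((n + 1 : ℕ) : ℤ) - 1 = n := by push_cast; ring
      rw [this, if_neg (by omega), add_zero]
      exact mul_mem h1 (mul_mem h2 ih)
  by_cases hn : n < 0
  · rw [hlow n hn]; exact zero_mem _
  · lift n to ℕ using not_lt.1 hn
    exact hnat n

/-- Structure of the coefficients -/
lemma coeff_struct (J : Finset (Fin l)) {x : RF k l} (hx : x ∈ PhiA k l) (n : ℤ) :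
    (EL J x).coeff n ∈ Subalgebra.toSubmodule (AA k l ⊓ KSA k Jᶜ) *
      Subalgebra.toSubmodule (PhiA k l ⊓ KSA k J) := by
  rw [Subalgebra.mul_toSubmodule, Subalgebra.mem_toSubmodule]
  set B := (AA k l ⊓ KSA k Jᶜ) ⊔ (PhiA k l ⊓ KSA k J) with hB
  have hU : AA k l ⊓ KSA k Jᶜ ≤ B := le_sup_left
  have hV : PhiA k l ⊓ KSA k J ≤ B := le_sup_right
  have hsing : ∀ (a n : ℤ) (y : RF k l), y ∈ B → (HahnSeries.single a y).coeff n ∈ B := by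
    intro a n y hy
    rw [HahnSeries.coeff_single]; split_ifs
    · exact hy
    · exact zero_mem _
  induction hx using Algebra.adjoin_induction generalizing n with
  | mem x hx =>
    rcases hx with ⟨i, rfl⟩ | ⟨i, j, rfl⟩
    · rw [EL_zv]
      apply hsing
      by_cases hi : i ∈ J
      · exact hV ⟨zv_PhiA i, zv_mem_KS hi⟩
      · exact hU ⟨PhiA_le_AA (zv_PhiA i), zv_mem_KS (by simpa using hi)⟩
    · have hz : ∀ i ∉ J, ∀ j ∈ J, (EL J (zv i - zv j)⁻¹).coeff n ∈ B := by
        intro i hi j hj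
        apply cross_coeff hi hj
        · exact hU ⟨Algebra.subset_adjoin (Or.inr ⟨i, rfl⟩),
            (KS k Jᶜ).inv_mem (zv_mem_KS (by simpa using hi))⟩
        · exact hV ⟨zv_PhiA j, zv_mem_KS hj⟩
      by_cases hi : i ∈ J <;> by_cases hj : j ∈ J
      · have : EL J ((zv i : RF k l) - zv j)⁻¹ = HahnSeries.single (-1) (zv i - zv j)⁻¹ := by
          rw [map_inv₀, map_sub, EL_zv, EL_zv, if_pos hi, if_pos hj,
            ← HahnSeries.single_sub]
          exact HahnSeries.inv_single _ _
        rw [this]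
        apply hsing
        exact hV ⟨inv_PhiA i j, (KS k J).inv_mem ((KS k J).sub_mem (zv_mem_KS hi) (zv_mem_KS hj))⟩
      · have := hz j hj i hi
        rw [← neg_sub, inv_neg, map_neg, HahnSeries.coeff_neg]
        exact neg_mem this
      · exact hz i hi j hj
      · have h1 : ((zv i : RF k l) - zv j)⁻¹ ∈ KS k Jᶜ :=
          (KS k Jᶜ).inv_mem ((KS k Jᶜ).sub_mem (zv_mem_KS (by simpa using hi))
            (zv_mem_KS (by simpa using hj)))
        rw [EL_disj (by simp) h1, HahnSeries.C_apply]
        apply hsing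
        exact hU ⟨PhiA_le_AA (inv_PhiA i j), h1⟩
  | algebraMap c => rw [EL_const, HahnSeries.C_apply]; exact hsing _ _ _ (Subalgebra.algebraMap_mem _ c)
  | add x y _ _ hx hy => rw [map_add, HahnSeries.coeff_add]; exact add_mem (hx n) (hy n)
  | mul x y _ _ hx hy =>
    obtain ⟨a, ha⟩ := ls_bdd (EL J x)
    obtain ⟨b, hb⟩ := ls_bdd (EL J y)
    rw [map_mul, ls_coeff_mul _ _ a b ha hb]
    exact sum_mem fun i _ => mul_mem (hx i) (hy _)
end Phis

section Trans
variable {k : Type} [Field k] {l : ℕ}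

/-- `z_j ↦ z_j + T` -/
def shAux (k : Type) [Field k] (l : ℕ) (J : Finset (Fin l)) :
    MvPolynomial (Fin l) k →+* Polynomial (MvPolynomial (Fin l) k) :=
  (MvPolynomial.aeval (R := k) fun i =>
    if i ∈ J then Polynomial.X + Polynomial.C (MvPolynomial.X i)
    else Polynomial.C (MvPolynomial.X i)).toRingHom

/-- `z_j ↦ z_j + c` -/
def trAux (k : Type) [Field k] (l : ℕ) (J : Finset (Fin l)) (c : k) :
    MvPolynomial (Fin l) k →+* MvPolynomial (Fin l) k :=
  (MvPolynomial.aeval (R := k) fun i =>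
    if i ∈ J then MvPolynomial.C c + (MvPolynomial.X i)
    else (MvPolynomial.X i)).toRingHom

lemma sh_eval (J : Finset (Fin l)) (c : k) (p : MvPolynomial (Fin l) k) :
    (shAux k l J p).eval (MvPolynomial.C c) = trAux k l J c p := by
  have h : (Polynomial.evalRingHom (MvPolynomial.C c : MvPolynomial (Fin l) k)).comp (shAux k l J)
      = trAux k l J c := by
    apply MvPolynomial.ringHom_ext
    · intro r; simp [shAux, trAux]
    · intro i; by_cases hi : i ∈ J <;> simp [shAux, trAux, hi]
  exact DFunLike.congr_fun h p

lemma trAux_comp (J : Finset (Fin l)) (c d : k) (p : MvPolynomial (Fin l) k) :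
    trAux k l J c (trAux k l J d p) = trAux k l J (c + d) p := by
  have h : (trAux k l J c).comp (trAux k l J d) = trAux k l J (c + d) := by
    apply MvPolynomial.ringHom_ext
    · intro r; simp [trAux]
    · intro i; by_cases hi : i ∈ J
      · simp [trAux, hi]; ring
      · simp [trAux, hi]
  exact DFunLike.congr_fun h p

lemma trAux_zero (J : Finset (Fin l)) (p : MvPolynomial (Fin l) k) :
    trAux k l J 0 p = p := by
  have h : (trAux k l J 0) = RingHom.id _ := by
    apply MvPolynomial.ringHom_ext
    · intro r; simp [trAux]
    · intro i; by_cases hi : i ∈ J <;> simp [trAux, hi]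
  exact DFunLike.congr_fun h p

lemma trAux_inj (J : Finset (Fin l)) (c : k) : Function.Injective (trAux k l J c) := by
  intro p q h
  have := congrArg (trAux k l J (-c)) h
  rwa [trAux_comp, trAux_comp, neg_add_cancel, trAux_zero, trAux_zero] at this

lemma shAux_inj (J : Finset (Fin l)) : Function.Injective (shAux k l J) := by
  intro p q h
  have := congrArg (Polynomial.eval (MvPolynomial.C 0)) h
  rwa [sh_eval, sh_eval, trAux_zero, trAux_zero] at this

/-- `z_j ↦ z_j + T` -/
def sh (J : Finset (Fin l)) : RF k l →+* RatFunc (RF k l) :=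
  IsFractionRing.lift (g := (toRatFuncHom k l).comp (shAux k l J))
    (fun a b hab => shAux_inj J (toRatFuncHom_injective hab))

/-- `z_j ↦ z_j + c` -/
def tr (J : Finset (Fin l)) (c : k) : RF k l →+* RF k l :=
  IsFractionRing.lift (g := (algebraMap (MvPolynomial (Fin l) k) (RF k l)).comp (trAux k l J c))
    (fun a b hab => trAux_inj J c (IsFractionRing.injective _ _ hab))

lemma sh_alg (J : Finset (Fin l)) (p : MvPolynomial (Fin l) k) :
    sh J (algebraMap (MvPolynomial (Fin l) k) (RF k l) p) =
      toRatFuncHom k l (shAux k l J p) := by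
  exact IsFractionRing.lift_algebraMap (g := (toRatFuncHom k l).comp (shAux k l J))
    (fun a b hab => shAux_inj J (toRatFuncHom_injective hab)) p

lemma tr_alg (J : Finset (Fin l)) (c : k) (p : MvPolynomial (Fin l) k) :
    tr J c (algebraMap (MvPolynomial (Fin l) k) (RF k l) p) = algebraMap _ _ (trAux k l J c p) := by
  exact IsFractionRing.lift_algebraMap
    (g := (algebraMap (MvPolynomial (Fin l) k) (RF k l)).comp (trAux k l J c))
    (fun a b hab => trAux_inj J c (IsFractionRing.injective _ _ hab)) p

lemma tr_const (J : Finset (Fin l)) (c d : k) : tr J c (algebraMap k (RF k l) d) =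
    algebraMap k (RF k l) d := by
  rw [← alg_C, tr_alg]; simp [trAux]

lemma tr_zv (J : Finset (Fin l)) (c : k) (i : Fin l) : tr J c (zv i : RF k l) =
    if i ∈ J then algebraMap k (RF k l) c + zv i else zv i := by
  conv_lhs => rw [zv]
  rw [tr_alg]
  by_cases hi : i ∈ J
  · simp [trAux, hi, zv, alg_C]
  · simp [trAux, hi, zv]

lemma tr_zero (J : Finset (Fin l)) (x : RF k l) : tr J 0 x = x := by
  refine hom_eq_on (S := Finset.univ) (tr J 0) (RingHom.id _) ?_ ?_ (mem_KS_univ x)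
  · intro c; rw [tr_const]; rfl
  · intro i _; rw [tr_zv]; simp

lemma sh_C {J : Finset (Fin l)} {x y : RF k l} (h1 : sh J x = RatFunc.C y) (c : k) :
    tr J c x = y := by
  obtain ⟨p, q, hq, rfl⟩ := IsFractionRing.div_surjective (A := MvPolynomial (Fin l) k) x
  have hq0 : q ≠ 0 := nonZeroDivisors.ne_zero hq
  have hq1 : toRatFuncHom k l (shAux k l J q) ≠ 0 := by
    rw [Ne, map_eq_zero_iff _ toRatFuncHom_injective, map_eq_zero_iff _ (shAux_inj J)]
    exact hq0
  rw [map_div₀, sh_alg, sh_alg, div_eq_iff hq1] at h1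
  have h2 : (algebraMap (Polynomial (RF k l)) (RatFunc (RF k l)))
      (((shAux k l J p).map (algebraMap (MvPolynomial (Fin l) k) (RF k l)))) =
      (algebraMap (Polynomial (RF k l)) (RatFunc (RF k l)))
      (Polynomial.C y *
        ((shAux k l J q).map (algebraMap (MvPolynomial (Fin l) k) (RF k l)))) := by
    simp only [map_mul, RatFunc.algebraMap_C]
    simp only [toRatFuncHom, RingHom.comp_apply, Polynomial.coe_mapRingHom] at h1
    exact h1
  have h3 := congrArg (Polynomial.eval (algebraMap (MvPolynomial (Fin l) k) (RF k l)
    (MvPolynomial.C c))) (IsFractionRing.injective _ _ h2)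
  have e1 : ∀ r : MvPolynomial (Fin l) k, ((shAux k l J r).map
      (algebraMap (MvPolynomial (Fin l) k) (RF k l))).eval (algebraMap (MvPolynomial (Fin l) k) (RF k l)
    (MvPolynomial.C c)) = algebraMap _ _ (trAux k l J c r) := by
    intro r
    rw [Polynomial.eval_map, Polynomial.eval₂_at_apply, sh_eval]
  simp only [Polynomial.eval_mul, e1, Polynomial.eval_C] at h3
  have h4 : algebraMap (MvPolynomial (Fin l) k) (RF k l) (trAux k l J c q) ≠ 0 := by
    rw [Ne, map_eq_zero_iff _ (IsFractionRing.injective _ _), map_eq_zero_iff _ (trAux_inj J c)]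
    exact hq0
  rw [map_div₀, tr_alg, tr_alg, div_eq_iff h4, h3]

lemma EL_tr {I J : Finset (Fin l)} (h : Disjoint I J) (c : k) (x : RF k l) :
    EL J (tr I c x) = lsmap (tr I c) (EL J x) := by
  refine hom_eq_on (S := Finset.univ) ((EL J).comp (tr I c)) ((lsmap (tr I c)).comp (EL J)) ?_ ?_
    (mem_KS_univ x)
  · intro d; simp only [RingHom.comp_apply]; rw [tr_const, EL_const, lsmap_C, tr_const]
  · intro i _
    simp only [RingHom.comp_apply]
    rw [tr_zv, EL_zv, lsmap_single, tr_zv]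
    by_cases hi : i ∈ I
    · have hj : i ∉ J := Finset.disjoint_left.1 h hi
      rw [if_pos hi, map_add, EL_const, EL_zv]
      simp [hj]
    · simp [hi, EL_zv]

lemma tr_comp_disj {I J : Finset (Fin l)} (h : Disjoint I J) (c : k) (x : RF k l) :
    tr I c (tr J c x) = tr (I ∪ J) c x := by
  refine hom_eq_on (S := Finset.univ) ((tr I c).comp (tr J c)) (tr (I ∪ J) c) ?_ ?_
    (mem_KS_univ x)
  · intro d; simp only [RingHom.comp_apply]; rw [tr_const, tr_const, tr_const]
  · intro i _
    simp only [RingHom.comp_apply]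
    rw [tr_zv J, tr_zv (I ∪ J)]
    by_cases hi : i ∈ I
    · have hj : i ∉ J := Finset.disjoint_left.1 h hi
      simp [hi, hj, tr_zv]
    · by_cases hj : i ∈ J
      · simp [hi, hj, tr_zv, tr_const]
      · simp [hi, hj, tr_zv]

variable (D : Fin l → Derivation k (RF k l) (RF k l))

/-- `Δ_S` -/
def Dl (S : Finset (Fin l)) : Derivation k (RF k l) (RF k l) := ∑ i ∈ S, D i
/-- Euler operator -/
def Eu (S : Finset (Fin l)) : Derivation k (RF k l) (RF k l) := ∑ i ∈ S, (zv i : RF k l) • D i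
/-- `Σ z_i² ∂_i` -/
def Xq (S : Finset (Fin l)) : Derivation k (RF k l) (RF k l) :=
  ∑ i ∈ S, (zv i ^ 2 : RF k l) • D i
/-- `Δ*_S` -/
def St (S : Finset (Fin l)) (x : RF k l) : RF k l := Xq D S x + 4 * (∑ i ∈ S, zv i) * x

lemma der_sum_apply (S : Finset (Fin l)) (d : Fin l → Derivation k (RF k l) (RF k l)) (x : RF k l) :
    (∑ i ∈ S, d i) x = ∑ i ∈ S, d i x := by
  induction S using Finset.induction_on with
  | empty => simp
  | insert a s ha ih => rw [Finset.sum_insert ha, Finset.sum_insert ha, Derivation.add_apply, ih]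

lemma Dl_apply (S : Finset (Fin l)) (x : RF k l) : Dl D S x = ∑ i ∈ S, D i x :=
  der_sum_apply S _ x
lemma Eu_apply (S : Finset (Fin l)) (x : RF k l) : Eu D S x = ∑ i ∈ S, zv i * D i x := by
  unfold Eu; rw [der_sum_apply]; rfl
lemma Xq_apply (S : Finset (Fin l)) (x : RF k l) : Xq D S x = ∑ i ∈ S, zv i ^ 2 * D i x := by
  unfold Xq; rw [der_sum_apply]; rfl
lemma St_apply (S : Finset (Fin l)) (x : RF k l) :
    St D S x = ∑ i ∈ S, (zv i ^ 2 * D i x + 4 * zv i * x) := by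
  unfold St; rw [Xq_apply, Finset.sum_add_distrib, Finset.mul_sum, Finset.sum_mul]

variable {D} (hD : IsPartialDeriv D)
include hD

lemma Dl_zv (S : Finset (Fin l)) (i : Fin l) : Dl D S (zv i) = if i ∈ S then 1 else 0 := by
  rw [Dl_apply, ← Finset.sum_ite_eq S i (fun _ => (1 : RF k l))]
  apply Finset.sum_congr rfl; intro j _; rw [hD]
lemma Eu_zv (S : Finset (Fin l)) (i : Fin l) : Eu D S (zv i) = if i ∈ S then zv i else 0 := by
  rw [Eu_apply, ← Finset.sum_ite_eq S i (fun i => (zv i : RF k l))]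
  apply Finset.sum_congr rfl; intro j _; rw [hD]; split_ifs <;> simp
lemma Xq_zv (S : Finset (Fin l)) (i : Fin l) : Xq D S (zv i) = if i ∈ S then zv i ^ 2 else 0 := by
  rw [Xq_apply, ← Finset.sum_ite_eq S i (fun i => (zv i ^ 2 : RF k l))]
  apply Finset.sum_congr rfl; intro j _; rw [hD]; split_ifs <;> simp

lemma tr_of_Dl [CharZero k] {J : Finset (Fin l)} {x : RF k l} (h : Dl D J x = 0) (c : k) :
    tr J c x = x := by
  have hzv : ∀ i : Fin l, r2l (sh J (zv i : RF k l)) =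
      (if i ∈ J then HahnSeries.single 1 1 else 0) + HahnSeries.C (zv i) := by
    intro i
    conv_lhs => rw [zv]
    rw [sh_alg]
    by_cases hi : i ∈ J
    · simp [shAux, toRatFuncHom, hi, r2l_X, r2l_C, zv]
    · simp [shAux, toRatFuncHom, hi, r2l_C, zv]
  have hder : ∀ y : RF k l, lsop 1 (0 : Derivation k (RF k l) (RF k l)) (r2l (sh J y)) =
      HahnSeries.single 1 1 * r2l (sh J (Dl D J y)) := by
    intro y
    rw [← sub_eq_zero]
    refine deriv_zero_on (S := Finset.univ) (r2l.comp (sh J))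
      { toFun := fun x => lsop 1 (0 : Derivation k (RF k l) (RF k l)) (r2l (sh J x)) -
          HahnSeries.single 1 1 * r2l (sh J (Dl D J x))
        map_zero' := by simp
        map_add' := fun a b => by simp only [map_add]; ring } ?_ ?_ ?_ (mem_KS_univ y)
    · intro a b
      simp only [AddMonoidHom.coe_mk, ZeroHom.coe_mk, map_mul, lsop_mul, Derivation.leibniz,
        smul_eq_mul, map_add, RingHom.comp_apply]
      ring
    · intro c
      simp only [AddMonoidHom.coe_mk, ZeroHom.coe_mk, Derivation.map_algebraMap, map_zero]
      rw [← alg_C, sh_alg]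
      have : r2l (toRatFuncHom k l (shAux k l J (MvPolynomial.C c))) =
        HahnSeries.C (algebraMap k (RF k l) c) := by
        simp [shAux, toRatFuncHom, r2l_C, MvPolynomial.algebraMap_eq, alg_C]
      rw [this, lsop_C]; simp
    · intro i _
      simp only [AddMonoidHom.coe_mk, ZeroHom.coe_mk, Dl_zv hD, hzv, map_add, lsop_C]
      by_cases hi : i ∈ J
      · simp [hi, lsop_single]
      · simp [hi]
  have h1 := hder x
  rw [h, map_zero, map_zero, mul_zero] at h1
  have h2 : ∃ y, r2l (sh J x) = HahnSeries.C y := by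
    refine ⟨(r2l (sh J x)).coeff 0, ?_⟩
    ext n
    rw [HahnSeries.C_apply, HahnSeries.coeff_single]
    split_ifs with hn
    · rw [hn]
    · have h3 := congrArg (fun f => HahnSeries.coeff f n) h1
      simp only [lsop_coeff, one_mul, Derivation.zero_apply, add_zero, HahnSeries.coeff_zero] at h3
      haveI : CharZero (RF k l) := charZero_of_injective_algebraMap (algebraMap k (RF k l)).injective
      rcases mul_eq_zero.1 h3 with h4 | h4
      · exact absurd (Int.cast_eq_zero.1 h4) hn
      · exact h4
  obtain ⟨y, hy⟩ := h2
  rw [← r2l_C] at hy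
  have hy := (r2l (L := RF k l)).injective hy
  rw [sh_C hy c, ← sh_C hy 0, tr_zero]

end Trans

section Adm
variable {k : Type} [Field k] [CharZero k] {l : ℕ}

lemma cz : CharZero (RF k l) := charZero_of_injective_algebraMap (algebraMap k (RF k l)).injective

lemma EL_inj (J : Finset (Fin l)) {x y : RF k l} (h : EL J x = EL J y) : x = y :=
  (EL J).injective h

lemma co_zv_mem {J : Finset (Fin l)} {i : Fin l} (hi : i ∈ J) (y : RF k l) (n : ℤ) :
    (EL J (zv i * y)).coeff n = zv i * (EL J y).coeff (n - 1) := by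
  rw [map_mul, EL_zv, if_pos hi]
  have := HahnSeries.coeff_single_mul_add (r := (zv i : RF k l)) (x := EL J y) (a := n - 1) (b := 1)
  simpa using this

lemma co_zv_notMem {J : Finset (Fin l)} {i : Fin l} (hi : i ∉ J) (y : RF k l) (n : ℤ) :
    (EL J (zv i * y)).coeff n = zv i * (EL J y).coeff n := by
  rw [map_mul, EL_zv, if_neg hi]
  have := HahnSeries.coeff_single_mul_add (r := (zv i : RF k l)) (x := EL J y) (a := n) (b := 0)
  simpa using this

lemma co_C (u : RF k l) (f : LaurentSeries (RF k l)) (n : ℤ) :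
    (HahnSeries.C u * f).coeff n = u * f.coeff n := by
  rw [HahnSeries.C_apply]
  have := HahnSeries.coeff_single_mul_add (r := u) (x := f) (a := n) (b := 0)
  simpa using this

lemma co_smul (J : Finset (Fin l)) (c : k) (x : RF k l) (n : ℤ) :
    (EL J (c • x)).coeff n = c • (EL J x).coeff n := by
  rw [EL_smul, co_C, Algebra.smul_def]

lemma alg_nat (n : ℕ) : algebraMap k (RF k l) n = n := map_natCast (algebraMap k (RF k l)) n
lemma alg_int (n : ℤ) : algebraMap k (RF k l) n = n := map_intCast (algebraMap k (RF k l)) n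
lemma alg_2 : algebraMap k (RF k l) 2 = 2 := by have := alg_nat (k := k) (l := l) 2; exact_mod_cast this
lemma alg_4 : algebraMap k (RF k l) 4 = 4 := by have := alg_nat (k := k) (l := l) 4; exact_mod_cast this
lemma int_smul (d : ℤ) (x : RF k l) : (d : RF k l) * x = (d : k) • x := by
  rw [Algebra.smul_def, alg_int]
lemma four_smul' (x : RF k l) : 4 * x = (4 : k) • x := by
  rw [Algebra.smul_def, alg_4]
lemma der_nat (F : Derivation k (RF k l) (RF k l)) (n : ℕ) : F (n : RF k l) = 0 := by
  rw [← alg_nat (k := k)]; exact F.map_algebraMap _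
lemma der_int (F : Derivation k (RF k l) (RF k l)) (n : ℤ) : F (n : RF k l) = 0 := by
  rw [← alg_int (k := k)]; exact F.map_algebraMap _

lemma co_sum (J : Finset (Fin l)) {ι : Type} (s : Finset ι) (f : ι → RF k l) (n : ℤ) :
    (EL J (∑ i ∈ s, f i)).coeff n = ∑ i ∈ s, (EL J (f i)).coeff n := by
  rw [map_sum, HahnSeries.coeff_sum]

variable {D : Fin l → Derivation k (RF k l) (RF k l)}

lemma sum_ext {f : Fin l → RF k l} (hD : IsPartialDeriv D) {S T : Finset (Fin l)} (h : S ⊆ T)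
    {x : RF k l} (hx : x ∈ KS k S) : ∑ i ∈ T, f i * D i x = ∑ i ∈ S, f i * D i x := by
  symm
  apply Finset.sum_subset h
  intro i _ hi
  rw [D_zero hD hi hx, mul_zero]

lemma Dl_ext (hD : IsPartialDeriv D) {S T : Finset (Fin l)} (h : S ⊆ T)
    {x : RF k l} (hx : x ∈ KS k S) : Dl D T x = Dl D S x := by
  have := sum_ext (f := fun _ => 1) hD h hx
  simpa [Dl_apply] using this
lemma Eu_ext (hD : IsPartialDeriv D) {S T : Finset (Fin l)} (h : S ⊆ T)
    {x : RF k l} (hx : x ∈ KS k S) : Eu D T x = Eu D S x := by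
  rw [Eu_apply, Eu_apply, sum_ext hD h hx]
lemma Xq_ext (hD : IsPartialDeriv D) {S T : Finset (Fin l)} (h : S ⊆ T)
    {x : RF k l} (hx : x ∈ KS k S) : Xq D T x = Xq D S x := by
  rw [Xq_apply, Xq_apply, sum_ext hD h hx]

lemma der_out {S : Finset (Fin l)} (hD : IsPartialDeriv D) (f : Fin l → RF k l)
    {x : RF k l} (h : ∀ i ∈ S, D i x = 0) : ∑ i ∈ S, f i * D i x = 0 :=
  Finset.sum_eq_zero fun i hi => by rw [h i hi, mul_zero]

lemma Eu_co (hD : IsPartialDeriv D) (J : Finset (Fin l)) (x : RF k l) (n : ℤ) :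
    Eu D J ((EL J x).coeff n) = n * (EL J x).coeff n := by
  have h := congrArg (fun f => HahnSeries.coeff f n) (EL_Eul hD J x)
  simp only [lsop_coeff, one_mul, Derivation.zero_apply, add_zero] at h
  rw [h, co_sum, Eu_apply]
  apply Finset.sum_congr rfl
  intro i hi
  rw [co_zv_mem hi, coeff_D_mem hD hi, sub_add_cancel]

lemma hom_Eu (hD : IsPartialDeriv D) (S : Finset (Fin l)) (d : ℤ) (x : RF k l) :
    EL S x = HahnSeries.single d x ↔ Eu D S x = d * x := by
  haveI := cz (k := k) (l := l)
  constructor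
  · intro h
    have := Eu_co hD S x d
    rwa [h, HahnSeries.coeff_single_same] at this
  · intro h
    have h1 := EL_Eul hD S x
    rw [← Eu_apply, h, int_smul] at h1
    have h2 : EL S x = HahnSeries.single d ((EL S x).coeff d) := by
      ext n
      rw [HahnSeries.coeff_single]
      split_ifs with hn
      · rw [hn]
      · have h3 := congrArg (fun f => HahnSeries.coeff f n) h1
        simp only [lsop_coeff, one_mul, Derivation.zero_apply, add_zero, co_smul] at h3
        rw [← int_smul] at h3
        rcases mul_eq_zero.1 (show ((n : RF k l) - d) * (EL S x).coeff n = 0 by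
          rw [sub_mul, h3, sub_self]) with h4 | h4
        · exact absurd (by exact_mod_cast sub_eq_zero.1 h4) hn
        · exact h4
    rw [EL_single_eq h2] at h2; exact h2

lemma co_St (hD : IsPartialDeriv D) {I J : Finset (Fin l)} (h : Disjoint I J) (x : RF k l) (n : ℤ) :
    (EL J (St D (I ∪ J) x)).coeff n =
      St D I ((EL J x).coeff n) + St D J ((EL J x).coeff (n - 1)) := by
  rw [St_apply, Finset.sum_union h, map_add, HahnSeries.coeff_add, co_sum, co_sum, St_apply, St_apply]
  congr 1
  · apply Finset.sum_congr rfl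
    intro i hi
    have hj : i ∉ J := Finset.disjoint_left.1 h hi
    have e : zv i ^ 2 * D i x + 4 * zv i * x = zv i * (zv i * D i x) + (4 : k) • (zv i * x) := by
      rw [← four_smul']; ring
    rw [e, map_add, HahnSeries.coeff_add, co_smul, ← four_smul', co_zv_notMem hj,
      co_zv_notMem hj, co_zv_notMem hj, coeff_D_notMem hD hj]
    ring
  · apply Finset.sum_congr rfl
    intro i hi
    have e : zv i ^ 2 * D i x + 4 * zv i * x = zv i * (zv i * D i x) + (4 : k) • (zv i * x) := by
      rw [← four_smul']; ring
    rw [e, map_add, HahnSeries.coeff_add, co_smul, ← four_smul', co_zv_mem hi,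
      co_zv_mem hi, co_zv_mem hi, coeff_D_mem hD hi, sub_add_cancel]
    ring

lemma co_Dl (hD : IsPartialDeriv D) {I J : Finset (Fin l)} (h : Disjoint I J) (x : RF k l) (n : ℤ) :
    (EL J (Dl D (I ∪ J) x)).coeff n =
      Dl D I ((EL J x).coeff n) + Dl D J ((EL J x).coeff (n + 1)) := by
  rw [Dl_apply, Finset.sum_union h, map_add, HahnSeries.coeff_add, co_sum, co_sum, Dl_apply, Dl_apply]
  congr 1
  · apply Finset.sum_congr rfl
    intro i hi
    rw [coeff_D_notMem hD (Finset.disjoint_left.1 h hi)]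
  · apply Finset.sum_congr rfl
    intro i hi
    rw [coeff_D_mem hD hi]

lemma co_Eu (hD : IsPartialDeriv D) {I J : Finset (Fin l)} (h : Disjoint I J) (x : RF k l) (n : ℤ) :
    (EL J (Eu D (I ∪ J) x)).coeff n = Eu D (I ∪ J) ((EL J x).coeff n) := by
  rw [Eu_apply, Finset.sum_union h, map_add, HahnSeries.coeff_add, co_sum, co_sum, Eu_apply,
    Finset.sum_union h]
  congr 1
  · apply Finset.sum_congr rfl
    intro i hi
    have hj := (Finset.disjoint_left.1 h hi)
    rw [co_zv_notMem hj, coeff_D_notMem hD hj]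
  · apply Finset.sum_congr rfl
    intro i hi
    rw [co_zv_mem hi, coeff_D_mem hD hi, sub_add_cancel]

variable (D) in
/-- admissible functions on `S` -/
def R (S : Finset (Fin l)) : Submodule k (RF k l) where
  carrier := {x | x ∈ PhiA k l ∧ x ∈ KS k S ∧ St D S x = 0 ∧
    EL S x = HahnSeries.single (-2 * (S.card : ℤ)) x ∧
    ∀ J ⊆ S, ∀ m : ℤ, (m < -2 * (J.card : ℤ) ∨ m = -2 * (J.card : ℤ) + 1) → (EL J x).coeff m = 0}
  zero_mem' := ⟨zero_mem _, zero_mem _, by simp [St], by simp, by simp⟩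
  add_mem' := by
    rintro a b ⟨h1, h2, h3, h4, h5⟩ ⟨g1, g2, g3, g4, g5⟩
    refine ⟨add_mem h1 g1, add_mem h2 g2, ?_, ?_, ?_⟩
    · have : St D S (a + b) = St D S a + St D S b := by simp only [St, map_add]; ring
      rw [this, h3, g3, add_zero]
    · rw [map_add, h4, g4, ← HahnSeries.single_add]
    · intro J hJ m hm
      rw [map_add, HahnSeries.coeff_add, h5 J hJ m hm, g5 J hJ m hm, add_zero]
  smul_mem' := by
    rintro c a ⟨h1, h2, h3, h4, h5⟩
    refine ⟨Subalgebra.smul_mem _ h1 c, smul_mem_KS c h2, ?_, ?_, ?_⟩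
    · have : St D S (c • a) = c • St D S a := by
        unfold St; rw [Derivation.map_smul, Algebra.smul_def, Algebra.smul_def, Algebra.smul_def]; ring
      rw [this, h3, smul_zero]
    · ext n
      rw [co_smul, h4, HahnSeries.coeff_single, HahnSeries.coeff_single]
      split_ifs <;> simp
    · intro J hJ m hm
      rw [co_smul, h5 J hJ m hm, smul_zero]

variable (D) in
/-- indecomposables -/
def R0 (S : Finset (Fin l)) : Submodule k (RF k l) where
  carrier := {x | x ∈ R D S ∧ ∀ J ⊆ S, J ≠ ∅ → J ≠ S → (EL J x).coeff (-2 * (J.card : ℤ)) = 0}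
  zero_mem' := ⟨zero_mem _, by simp⟩
  add_mem' := by
    rintro a b ⟨h1, h2⟩ ⟨g1, g2⟩
    refine ⟨add_mem h1 g1, fun J hJ h3 h4 => ?_⟩
    rw [map_add, HahnSeries.coeff_add, h2 J hJ h3 h4, g2 J hJ h3 h4, add_zero]
  smul_mem' := by
    rintro c a ⟨h1, h2⟩
    refine ⟨Submodule.smul_mem _ _ h1, fun J hJ h3 h4 => ?_⟩
    rw [co_smul, h2 J hJ h3 h4, smul_zero]

lemma adm_iff {S : Finset (Fin l)} {x : RF k l} : Admissible D S x ↔ x ∈ R D S := by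
  unfold Admissible
  rw [mem_Phi, KS_iff, ← St_apply, homog_iff]
  change _ ↔ _ ∧ _ ∧ _ ∧ _ ∧ _
  rw [neg_mul]
  simp only [component_eq]
  refine and_congr Iff.rfl (and_congr Iff.rfl (and_congr Iff.rfl (and_congr Iff.rfl ?_)))
  refine forall_congr' fun J => forall_congr' fun _ => ?_
  constructor
  · intro h m hm
    have := h (m + 2 * J.card) (by omega)
    simpa using this
  · intro h n hn
    exact h _ (by omega)

lemma admInd_iff {S : Finset (Fin l)} {x : RF k l} : AdmissibleInd D S x ↔ x ∈ R0 D S := by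
  unfold AdmissibleInd
  rw [adm_iff]
  change _ ↔ _ ∧ _
  simp only [component_eq, zero_sub, neg_mul]

lemma span_adm (S : Finset (Fin l)) : Submodule.span k {x : RF k l | Admissible D S x} = R D S := by
  have : {x : RF k l | Admissible D S x} = (R D S : Set (RF k l)) := Set.ext fun x => adm_iff
  rw [this, Submodule.span_eq]

lemma span_admInd (S : Finset (Fin l)) :
    Submodule.span k {x : RF k l | AdmissibleInd D S x} = R0 D S := by
  have : {x : RF k l | AdmissibleInd D S x} = (R0 D S : Set (RF k l)) := Set.ext fun x => admInd_iff
  rw [this, Submodule.span_eq]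

/-! nilpotence of the translation generator -/

lemma nil_mul (F : Derivation k (RF k l) (RF k l)) : ∀ (s m n : ℕ), m + n = s → ∀ x y : RF k l,
    F^[m] x = 0 → F^[n] y = 0 → F^[s] (x * y) = 0 := by
  have hz : ∀ s, F^[s] 0 = 0 := fun s => by
    induction s with
    | zero => rfl
    | succ s ih => rw [Function.iterate_succ_apply, map_zero, ih]
  have ha : ∀ s x y, F^[s] (x + y) = F^[s] x + F^[s] y := fun s => by
    induction s with
    | zero => intro x y; rfl
    | succ s ih => intro x y; simp only [Function.iterate_succ_apply, map_add, ih]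
  intro s
  induction s with
  | zero =>
    intro m n h x y hx hy
    have : m = 0 := by omega
    subst this
    simp only [Function.iterate_zero, id] at hx ⊢
    rw [hx, zero_mul]
  | succ s ih =>
    intro m n h x y hx hy
    rcases m with _ | m
    · simp only [Function.iterate_zero, id] at hx
      rw [hx, zero_mul, hz]
    rcases n with _ | n
    · simp only [Function.iterate_zero, id] at hy
      rw [hy, mul_zero, hz]
    rw [Function.iterate_succ_apply, Derivation.leibniz, ha, smul_eq_mul, smul_eq_mul,
      ih (m + 1) n (by omega) x (F y) hx hy, mul_comm, ih m (n + 1) (by omega) (F x) y hx hy, add_zero]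

lemma nil_PhiA (hD : IsPartialDeriv D) {x : RF k l} (hx : x ∈ PhiA k l) :
    ∃ n, (Dl D Finset.univ)^[n] x = 0 := by
  have ha : ∀ s x y, (Dl D Finset.univ)^[s] (x + y) =
      (Dl D Finset.univ)^[s] x + (Dl D Finset.univ)^[s] y := fun s => by
    induction s with
    | zero => intro x y; rfl
    | succ s ih => intro x y; simp only [Function.iterate_succ_apply, map_add, ih]
  have hz : ∀ s, (Dl D Finset.univ)^[s] 0 = 0 := fun s => by
    induction s with
    | zero => rfl
    | succ s ih => rw [Function.iterate_succ_apply, map_zero, ih]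
  unfold PhiA at hx
  induction hx using Algebra.adjoin_induction with
  | mem x hx =>
    rcases hx with ⟨i, rfl⟩ | hx
    · refine ⟨2, ?_⟩
      simp [Dl_zv hD]
    · refine ⟨1, ?_⟩
      simp only [Set.mem_range, Set.mem_ofPred_eq] at hx
      obtain ⟨i, j, rfl⟩ := hx
      simp [Derivation.leibniz_inv, Dl_zv hD]
  | algebraMap r => exact ⟨1, by simp⟩
  | add x y _ _ h1 h2 =>
    obtain ⟨m, hm⟩ := h1
    obtain ⟨n, hn⟩ := h2
    refine ⟨m + n, ?_⟩
    rw [ha, add_comm m n, Function.iterate_add_apply, hm, add_comm n m, Function.iterate_add_apply, hn,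
      hz, hz, add_zero]
  | mul x y _ _ h1 h2 =>
    obtain ⟨m, hm⟩ := h1
    obtain ⟨n, hn⟩ := h2
    exact ⟨m + n, nil_mul _ _ m n rfl x y hm hn⟩

lemma comm_FX (hD : IsPartialDeriv D) (x : RF k l) : Dl D Finset.univ (Xq D Finset.univ x) =
    Xq D Finset.univ (Dl D Finset.univ x) + 2 * Eu D Finset.univ x := by
  have : ⁅Dl D Finset.univ, Xq D Finset.univ⁆ = (2 : k) • Eu D Finset.univ := by
    apply der_ext
    intro i
    rw [Derivation.commutator_apply, Derivation.smul_apply]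
    simp [Dl_zv hD, Xq_zv hD, Eu_zv hD, Derivation.leibniz_pow, Algebra.smul_def, alg_2]
  have h := DFunLike.congr_fun this x
  rw [Derivation.commutator_apply, Derivation.smul_apply, Algebra.smul_def] at h
  rw [alg_2] at h
  linear_combination h

lemma comm_EF (hD : IsPartialDeriv D) (x : RF k l) : Eu D Finset.univ (Dl D Finset.univ x) =
    Dl D Finset.univ (Eu D Finset.univ x) - Dl D Finset.univ x := by
  have : ⁅Eu D Finset.univ, Dl D Finset.univ⁆ = - Dl D Finset.univ := by
    apply der_ext
    intro i
    rw [Derivation.commutator_apply, Derivation.neg_apply]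
    simp [Dl_zv hD, Xq_zv hD, Eu_zv hD]
  have h := DFunLike.congr_fun this x
  rw [Derivation.commutator_apply, Derivation.neg_apply] at h
  linear_combination h

lemma R_Dl (hD : IsPartialDeriv D) {S : Finset (Fin l)} {x : RF k l} (hx : x ∈ R D S) :
    Dl D Finset.univ x = 0 := by
  haveI := cz (k := k) (l := l)
  obtain ⟨h1, h2, h3, h4, -⟩ := hx
  rw [hom_Eu hD, ← Eu_ext hD (Finset.subset_univ S) h2] at h4
  unfold St at h3
  rw [← Xq_ext hD (Finset.subset_univ S) h2] at h3
  set F := Dl D Finset.univ with hF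
  set σ : RF k l := ∑ i ∈ S, zv i with hσ
  have hFσ : F σ = S.card := by
    rw [hσ, map_sum, hF]; simp [Dl_zv hD]
  have hE : ∀ n : ℕ, Eu D Finset.univ (F^[n] x) = (-2 * S.card - n) * F^[n] x := by
    intro n
    induction n with
    | zero => simp [h4]
    | succ n ih =>
      rw [Function.iterate_succ_apply', comm_EF hD, ih, ← hF, Derivation.leibniz]
      have : F ((-2 * S.card - n : RF k l)) = 0 := by
        have := der_int F (-2 * S.card - n); push_cast at this; exact this
      rw [this]; simp; ring
  have hS : ∀ n : ℕ, Xq D Finset.univ (F^[n+1] x) + 4 * σ * F^[n+1] x = (n + 1) * n * F^[n] x := by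
    intro n
    induction n with
    | zero =>
      have := congrArg F h3
      have h4' : F 4 = 0 := by have := der_nat F 4; exact_mod_cast this
      rw [map_add, comm_FX hD, h4, ← hF, Derivation.leibniz, Derivation.leibniz, h4', hFσ, map_zero] at this
      simp at this ⊢
      linear_combination this
    | succ n ih =>
      have := congrArg F ih
      have h4' : F 4 = 0 := by have := der_nat F 4; exact_mod_cast this
      have h5 : F ((n + 1) * n) = 0 := by
        have := der_nat F ((n + 1) * n); push_cast at this; exact this
      rw [map_add, comm_FX hD, hE, ← hF, Derivation.leibniz, Derivation.leibniz, h4', hFσ,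
        Derivation.leibniz, h5] at this
      rw [Function.iterate_succ_apply' F (n + 1)]
      simp only [smul_eq_mul, mul_zero, add_zero, ← Function.iterate_succ_apply' F] at this ⊢
      push_cast at this ⊢
      linear_combination this
  obtain ⟨n, hn⟩ := nil_PhiA hD h1
  induction n with
  | zero => simp at hn; rw [hn, map_zero]
  | succ n ih =>
    rcases n with _ | n
    · exact hn
    · apply ih
      have := hS (n + 1)
      rw [← hF] at hn ⊢
      rw [hn, map_zero, mul_zero, add_zero] at this
      rcases mul_eq_zero.1 this.symm with h | h
      · rcases mul_eq_zero.1 h with h | h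
        · norm_cast at h
        · norm_cast at h
      · exact h

end Adm

section Fact
variable {k : Type} [Field k] [CharZero k] {l : ℕ}
variable {D : Fin l → Derivation k (RF k l) (RF k l)}

lemma tr_vd : trAux k l Finset.univ 1 (vd k l) = vd k l := by
  unfold vd
  rw [map_prod]
  apply Finset.prod_congr rfl; intro i _
  rw [map_prod]
  apply Finset.prod_congr rfl; intro j _
  split_ifs <;> simp [trAux]

lemma relprime_Z : IsRelPrime (∏ i : Fin l, (MvPolynomial.X i : MvPolynomial (Fin l) k))
    (trAux k l Finset.univ 1 (∏ i : Fin l, MvPolynomial.X i)) := by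
  rw [map_prod]
  apply IsRelPrime.prod_left
  intro i _
  apply IsRelPrime.prod_right
  intro j _
  have hi : Irreducible (MvPolynomial.X i : MvPolynomial (Fin l) k) :=
    (MvPolynomial.X_prime (i := i)).irreducible
  rw [hi.isRelPrime_iff_not_dvd]
  rintro ⟨q, hq⟩
  have := congrArg (MvPolynomial.eval (fun _ => (0 : k))) hq
  simp [trAux] at this

lemma pole_rem (hD : IsPartialDeriv D) {u : RF k l} (hu : u ∈ AA k l)
    (h : Dl D Finset.univ u = 0) : u ∈ PhiA k l := by
  have ht := tr_of_Dl hD h 1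
  set Z : MvPolynomial (Fin l) k := ∏ i, MvPolynomial.X i with hZ
  have hZ0 : Z ≠ 0 := by
    rw [hZ, Finset.prod_ne_zero_iff]; intro i _; exact MvPolynomial.X_ne_zero i
  have hcl : AA k l ≤ clr (vd k l * Z) := by
    refine AA_clr (dvd_mul_right _ _) ?_
    intro i
    exact Dvd.dvd.mul_left (Finset.dvd_prod_of_mem _ (Finset.mem_univ i)) _
  obtain ⟨N, p, hp⟩ := hcl hu
  have h2 := congrArg (tr Finset.univ 1) hp
  simp only [map_mul, map_pow, ht, tr_alg, tr_vd] at h2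
  have h3 : p * (trAux k l Finset.univ 1 Z) ^ N = trAux k l Finset.univ 1 p * Z ^ N := by
    apply IsFractionRing.injective (MvPolynomial (Fin l) k) (RF k l)
    rw [map_mul, map_mul, ← hp, ← h2]
    simp only [map_mul, map_pow]
    ring
  have h4 : Z ^ N ∣ p := by
    have h5 : IsRelPrime (Z ^ N) ((trAux k l Finset.univ 1 Z) ^ N) := IsRelPrime.pow relprime_Z
    exact h5.dvd_of_dvd_mul_right ⟨trAux k l Finset.univ 1 p, by rw [h3, mul_comm]⟩
  obtain ⟨q, rfl⟩ := h4
  rw [← mem_Phi]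
  apply Phi_of_clr
  refine ⟨N, q, ?_⟩
  have hZ1 : algebraMap (MvPolynomial (Fin l) k) (RF k l) Z ≠ 0 := by
    rw [Ne, map_eq_zero_iff _ (IsFractionRing.injective _ _)]; exact hZ0
  apply mul_left_cancel₀ (pow_ne_zero N hZ1)
  simp only [map_mul, map_pow] at hp
  rw [← hp]; ring

/-- leading component -/
def T (J : Finset (Fin l)) : RF k l →ₗ[k] RF k l where
  toFun x := (EL J x).coeff (-2 * (J.card : ℤ))
  map_add' x y := by rw [map_add, HahnSeries.coeff_add]
  map_smul' c x := co_smul J c x _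

lemma T_def (J : Finset (Fin l)) (x : RF k l) : T J x = (EL J x).coeff (-2 * (J.card : ℤ)) := rfl

variable (D) in
/-- additive `St` -/
def StA (S : Finset (Fin l)) : RF k l →+ RF k l where
  toFun x := St D S x
  map_zero' := by simp [St]
  map_add' x y := by simp only [St, map_add]; ring

variable (D) in
/-- additive `Eu - d` -/
def EuA (S : Finset (Fin l)) (d : ℤ) : RF k l →+ RF k l where
  toFun x := Eu D S x - d * x
  map_zero' := by simp
  map_add' x y := by simp only [map_add]; ring

/-- additive coefficient -/
def COA (J : Finset (Fin l)) (m : ℤ) : RF k l →+ RF k l where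
  toFun x := (EL J x).coeff m
  map_zero' := by simp
  map_add' x y := by rw [map_add, HahnSeries.coeff_add]

lemma sum_mem_KS (hD : IsPartialDeriv D) {S K : Finset (Fin l)} (h : S ⊆ K) {x : RF k l}
    (hx : x ∈ KS k K) : Eu D S x ∈ KS k K ∧ Dl D S x ∈ KS k K ∧ St D S x ∈ KS k K := by
  have h4 : (4 : RF k l) ∈ KS k K := by rw [← alg_4 (k := k)]; exact const_mem_KS K _
  rw [Eu_apply, Dl_apply, St_apply]
  refine ⟨sum_mem fun i hi => ?_, sum_mem fun i hi => ?_, sum_mem fun i hi => ?_⟩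
  · exact mul_mem (zv_mem_KS (h hi)) (D_mem hD i hx)
  · exact D_mem hD i hx
  · exact add_mem (mul_mem (pow_mem (zv_mem_KS (h hi)) _) (D_mem hD i hx))
      (mul_mem (mul_mem h4 (zv_mem_KS (h hi))) hx)

lemma ops_zero (hD : IsPartialDeriv D) {S K : Finset (Fin l)} (h : Disjoint S K) {x : RF k l}
    (hx : x ∈ KS k K) : Eu D S x = 0 ∧ Dl D S x = 0 ∧ Xq D S x = 0 := by
  have hi : ∀ i ∈ S, D i x = 0 := fun i hi => D_zero hD (Finset.disjoint_left.1 h hi) hx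
  rw [Eu_apply, Dl_apply, Xq_apply]
  refine ⟨Finset.sum_eq_zero fun i h => ?_, Finset.sum_eq_zero fun i h => ?_,
    Finset.sum_eq_zero fun i h => ?_⟩ <;> simp [hi i h]

lemma ops_mul (hD : IsPartialDeriv D) {S K : Finset (Fin l)} (h : Disjoint S K) {u : RF k l}
    (hu : u ∈ KS k K) (v : RF k l) : Eu D S (u * v) = u * Eu D S v ∧ Dl D S (u * v) = u * Dl D S v
      ∧ St D S (u * v) = u * St D S v := by
  obtain ⟨h1, h2, h3⟩ := ops_zero hD h hu
  refine ⟨?_, ?_, ?_⟩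
  · rw [Derivation.leibniz, h1]; simp
  · rw [Derivation.leibniz, h2]; simp
  · unfold St; rw [Derivation.leibniz, h3]; simp; ring

lemma T_facts (hD : IsPartialDeriv D) {I J : Finset (Fin l)} (hd : Disjoint I J) {x : RF k l}
    (hx : x ∈ R D (I ∪ J)) : T J x ∈ KS k (I ∪ J) ∧ Dl D I (T J x) = 0 ∧ Dl D J (T J x) = 0 ∧
      St D I (T J x) = 0 ∧ St D J (T J x) = 0 ∧ Eu D I (T J x) = ((-2 * (I.card : ℤ) : ℤ) : RF k l) * T J x ∧
      Eu D J (T J x) = ((-2 * (J.card : ℤ) : ℤ) : RF k l) * T J x := by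
  have hF := R_Dl hD hx
  obtain ⟨h1, h2, h3, h4, h5⟩ := hx
  rw [Dl_ext hD (Finset.subset_univ _) h2] at hF
  have hJ : J ⊆ I ∪ J := Finset.subset_union_right
  have em := h5 J hJ (-2 * (J.card : ℤ) - 1) (Or.inl (by omega))
  have ep := h5 J hJ (-2 * (J.card : ℤ) + 1) (Or.inr rfl)
  have hS := co_St hD hd x
  have hDl := co_Dl hD hd x
  rw [hom_Eu hD] at h4
  have hE := co_Eu hD hd x (-2 * (J.card : ℤ))
  simp only [h3, hF, map_zero, HahnSeries.coeff_zero] at hS hDl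
  rw [h4, int_smul, co_smul, ← int_smul, Finset.card_union_of_disjoint hd] at hE
  have hEJ := Eu_co hD J x (-2 * (J.card : ℤ))
  have S0 : St D I (0 : RF k l) = 0 := by simp [St]
  have S0' : St D J (0 : RF k l) = 0 := by simp [St]
  refine ⟨EL_coeff_mem h2 _, ?_, ?_, ?_, ?_, ?_, hEJ⟩
  · have := hDl (-2 * (J.card : ℤ)); rw [ep, map_zero, add_zero] at this; exact this.symm
  · have := hDl (-2 * (J.card : ℤ) - 1); rw [em, map_zero, zero_add, sub_add_cancel] at this
    exact this.symm
  · have := hS (-2 * (J.card : ℤ)); rw [em, S0', add_zero] at this; exact this.symm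
  · have := hS (-2 * (J.card : ℤ) + 1); rw [ep, S0, zero_add, add_sub_cancel_right] at this
    exact this.symm
  · have hu : Eu D (I ∪ J) (T J x) = Eu D I (T J x) + Eu D J (T J x) := by
      rw [Eu_apply, Eu_apply, Eu_apply, Finset.sum_union hd]
    rw [← T_def] at hE hEJ
    rw [hu, hEJ] at hE
    push_cast at hE ⊢
    linear_combination -hE

lemma T_fact (hD : IsPartialDeriv D) {I J : Finset (Fin l)} (hd : Disjoint I J) {x : RF k l}
    (hx : x ∈ R D (I ∪ J)) : T J x ∈ R D I * R D J := by
  obtain ⟨f1, f2, f3, f4, f5, f6, f7⟩ := T_facts hD hd hx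
  obtain ⟨h1, h2, h3, h4, h5⟩ := hx
  have hs := coeff_struct J h1 (-2 * (J.card : ℤ))
  rw [← T_def] at hs
  have s1 : T J x ∈ Subalgebra.toSubmodule (AA k l ⊓ KSA k Jᶜ) * R D J := by
    refine slice hD (I := Jᶜ) (J := J) disjoint_compl_left
      (κ := Option (Option {p : Finset (Fin l) × ℤ // p.1 ⊆ J ∧
        (p.2 < -2 * (p.1.card : ℤ) ∨ p.2 = -2 * (p.1.card : ℤ) + 1)})) (Subalgebra.toSubmodule (AA k l ⊓ KSA k Jᶜ)) (Subalgebra.toSubmodule (PhiA k l ⊓ KSA k J)) (R D J) (fun u hu => hu.2)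
      (fun a => match a with
        | none => StA D J
        | some none => EuA D J (-2 * (J.card : ℤ))
        | some (some p) => COA p.1.1 p.1.2)
      (fun a => match a with
        | none => StA D J
        | some none => EuA D J (-2 * (J.card : ℤ))
        | some (some p) => COA p.1.1 p.1.2) ?_ ?_ ?_ hs ?_
    · rintro a u ⟨-, hu⟩ v hv
      have hm := ops_mul hD disjoint_compl_right hu v
      rcases a with _ | _ | ⟨⟨J2, m⟩, hJ2, hm⟩
      · exact hm.2.2
      · change Eu D J (u * v) - _ * (u * v) = u * (Eu D J v - _ * v)
        rw [hm.1]; ring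
      · change (EL J2 (u * v)).coeff m = u * (EL J2 v).coeff m
        rw [map_mul, EL_disj (fun i hi h => Finset.mem_compl.1 hi (hJ2 h)) hu, co_C]
    · rintro a v ⟨-, hv⟩
      have hm := sum_mem_KS hD (Finset.Subset.refl J) hv
      rcases a with _ | _ | ⟨⟨J2, m⟩, hJ2, hm⟩
      · exact hm.2.2
      · refine sub_mem hm.1 (mul_mem ?_ hv)
        rw [← alg_int (k := k)]; exact const_mem_KS _ _
      · exact EL_coeff_mem hv _
    · rintro v ⟨hv1, hv2⟩ hv
      refine ⟨hv1, hv2, hv none, ?_, ?_⟩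
      · rw [hom_Eu hD]; exact sub_eq_zero.1 (hv (some none))
      · intro J2 hJ2 m hm
        exact hv (some (some ⟨(J2, m), hJ2, hm⟩))
    · intro a
      rcases a with _ | _ | ⟨⟨J2, m⟩, hJ2, hm⟩
      · exact f5
      · exact sub_eq_zero.2 f7
      · change (EL J2 ((EL J x).coeff _)).coeff m = 0
        rw [nested hJ2 h1, h5 J2 (hJ2.trans Finset.subset_union_right) m hm]; simp
  rw [mul_comm] at s1 ⊢
  refine slice hD (I := J) (J := Jᶜ) disjoint_compl_right
      (κ := Option (Option (Option ({j : Fin l // j ∉ I ∪ J} ⊕ {p : Finset (Fin l) × ℤ // p.1 ⊆ I ∧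
        (p.2 < -2 * (p.1.card : ℤ) ∨ p.2 = -2 * (p.1.card : ℤ) + 1)})))) (R D J) (Subalgebra.toSubmodule (AA k l ⊓ KSA k Jᶜ)) (R D I) (fun u hu => hu.2.1)
      (fun a => match a with
        | none => StA D I
        | some none => EuA D I (-2 * (I.card : ℤ))
        | some (some none) => (Dl D I : RF k l →ₗ[k] RF k l).toAddMonoidHom
        | some (some (some (Sum.inl j))) => (D j : RF k l →ₗ[k] RF k l).toAddMonoidHom
        | some (some (some (Sum.inr p))) => COA (p.1.1 ∪ J) (p.1.2 + (-2 * (J.card : ℤ))))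
      (fun a => match a with
        | none => StA D I
        | some none => EuA D I (-2 * (I.card : ℤ))
        | some (some none) => (Dl D I : RF k l →ₗ[k] RF k l).toAddMonoidHom
        | some (some (some (Sum.inl j))) => (D j : RF k l →ₗ[k] RF k l).toAddMonoidHom
        | some (some (some (Sum.inr p))) => COA p.1.1 p.1.2) ?_ ?_ ?_ s1 ?_
  · rintro a u hu v ⟨-, hv⟩
    have hm := ops_mul hD hd hu.2.1 v
    rcases a with _ | _ | _ | ⟨⟨j, hj⟩⟩ | ⟨⟨J2, m⟩, hJ2, hm⟩
    · exact hm.2.2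
    · change Eu D I (u * v) - _ * (u * v) = u * (Eu D I v - _ * v)
      rw [hm.1]; ring
    · exact hm.2.1
    · change D j (u * v) = u * D j v
      rw [Derivation.leibniz, D_zero hD (fun h => hj (Finset.mem_union_right _ h)) hu.2.1]; simp
    · change (EL (J2 ∪ J) (u * v)).coeff (m + (-2 * (J.card : ℤ))) = u * (EL J2 v).coeff m
      rw [map_mul, EL_inter (J' := J) (S := J) (by intro i hi; simp [hi]) hu.2.1, hu.2.2.2.1,
        EL_inter (J' := J2) (S := Jᶜ) _ hv, HahnSeries.coeff_single_mul_add]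
      intro i hi
      simp [Finset.mem_compl.1 hi]
  · rintro a v ⟨-, hv⟩
    have hIJ : I ⊆ Jᶜ := fun i hi => Finset.mem_compl.2 (Finset.disjoint_left.1 hd hi)
    have hm := sum_mem_KS hD hIJ hv
    rcases a with _ | _ | _ | ⟨⟨j, hj⟩⟩ | ⟨⟨J2, m⟩, hJ2, hm⟩
    · exact hm.2.2
    · refine sub_mem hm.1 (mul_mem ?_ hv)
      rw [← alg_int (k := k)]; exact const_mem_KS _ _
    · exact hm.2.1
    · exact D_mem hD j hv
    · exact EL_coeff_mem hv _
  · rintro v ⟨hv1, hv2⟩ hv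
    have hvI : v ∈ KS k I := by
      rw [mem_KS_iff hD]
      intro j hj
      by_cases hjJ : j ∈ J
      · exact D_zero hD (fun h => Finset.mem_compl.1 h hjJ) hv2
      · exact hv (some (some (some (Sum.inl ⟨j, by simp [hj, hjJ]⟩))))
    refine ⟨pole_rem hD hv1 ?_, hvI, hv none, ?_, ?_⟩
    · rw [Dl_ext hD (Finset.subset_univ _) hvI]; exact hv (some (some none))
    · rw [hom_Eu hD]; exact sub_eq_zero.1 (hv (some none))
    · intro J2 hJ2 m hm
      exact hv (some (some (some (Sum.inr ⟨(J2, m), hJ2, hm⟩))))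
  · intro a
    rcases a with _ | _ | _ | ⟨⟨j, hj⟩⟩ | ⟨⟨J2, m⟩, hJ2, hm⟩
    · exact f4
    · exact sub_eq_zero.2 f6
    · exact f2
    · exact D_zero hD hj f1
    · change (EL (J2 ∪ J) ((EL J x).coeff _)).coeff _ = 0
      rw [← nested Finset.subset_union_right h1, h5 (J2 ∪ J)]
      · simp
      · exact Finset.union_subset_union_left hJ2
      · simp only at hm
        have : Disjoint J2 J := Finset.disjoint_of_subset_left hJ2 hd
        rw [Finset.card_union_of_disjoint this]
        push_cast
        omega

end Fact

section Comm
variable {k : Type} [Field k] [CharZero k] {l : ℕ}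
variable {D : Fin l → Derivation k (RF k l) (RF k l)}

lemma St_union {I K : Finset (Fin l)} (h : Disjoint I K) (x : RF k l) :
    St D (I ∪ K) x = St D I x + St D K x := by
  rw [St_apply, St_apply, St_apply, Finset.sum_union h]

lemma EL_prod {I K J : Finset (Fin l)} (h : Disjoint I K) {u v : RF k l} (hu : u ∈ KS k I)
    (hv : v ∈ KS k K) : EL J (u * v) = EL (J ∩ I) u * EL (J ∩ K) v := by
  rw [map_mul, EL_inter (J' := J ∩ I) (S := I) (by intro i hi; simp [hi]) hu,
    EL_inter (J' := J ∩ K) (S := K) (by intro i hi; simp [hi]) hv]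

lemma card_split {I K J : Finset (Fin l)} (h : Disjoint I K) (hJ : J ⊆ I ∪ K) :
    (J.card : ℤ) = (J ∩ I).card + (J ∩ K).card := by
  have : J = (J ∩ I) ∪ (J ∩ K) := by
    rw [← Finset.inter_union_distrib_left]; exact (Finset.inter_eq_left.2 hJ).symm
  conv_lhs => rw [this]
  rw [Finset.card_union_of_disjoint]
  · push_cast; ring
  · exact Finset.disjoint_of_subset_left Finset.inter_subset_right
      (Finset.disjoint_of_subset_right Finset.inter_subset_right h)

lemma R_mul (hD : IsPartialDeriv D) {I K : Finset (Fin l)} (h : Disjoint I K) {u v : RF k l}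
    (hu : u ∈ R D I) (hv : v ∈ R D K) : u * v ∈ R D (I ∪ K) := by
  obtain ⟨u1, u2, u3, u4, u5⟩ := hu
  obtain ⟨v1, v2, v3, v4, v5⟩ := hv
  refine ⟨mul_mem u1 v1, mul_mem (KS_mono Finset.subset_union_left u2)
    (KS_mono Finset.subset_union_right v2), ?_, ?_, ?_⟩
  · rw [St_union h, (ops_mul hD h.symm u2 v).2.2, mul_comm u v, (ops_mul hD h v2 u).2.2, u3, v3]
    simp
  · rw [EL_prod h u2 v2]
    have e1 : (I ∪ K) ∩ I = I := by ext; simp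
    have e2 : (I ∪ K) ∩ K = K := by ext; simp
    rw [e1, e2, u4, v4, HahnSeries.single_mul_single, Finset.card_union_of_disjoint h]
    congr 2; push_cast; ring
  · intro J hJ m hm
    have hc := card_split h hJ
    rw [EL_prod h u2 v2]
    have ha := u5 (J ∩ I) Finset.inter_subset_right
    have hb := v5 (J ∩ K) Finset.inter_subset_right
    rcases hm with hm | rfl
    · exact ls_low_mul _ _ _ _ (fun n hn => ha n (Or.inl hn)) (fun n hn => hb n (Or.inl hn)) m
        (by rw [hc] at hm; linarith)
    · have := ls_lead1_mul _ _ _ _ (fun n hn => ha n (Or.inl hn)) (fun n hn => hb n (Or.inl hn))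
        (ha _ (Or.inr rfl)) (hb _ (Or.inr rfl))
      rw [show -2 * (J.card : ℤ) + 1 = -2 * ((J ∩ I).card : ℤ) + -2 * ((J ∩ K).card : ℤ) + 1 by
        rw [hc]; ring]
      exact this

lemma T_mul {I K J : Finset (Fin l)} (h : Disjoint I K) (hJ : J ⊆ I ∪ K) {u v : RF k l}
    (hu : u ∈ R D I) (hv : v ∈ R D K) : T J (u * v) = T (J ∩ I) u * T (J ∩ K) v := by
  obtain ⟨u1, u2, u3, u4, u5⟩ := hu
  obtain ⟨v1, v2, v3, v4, v5⟩ := hv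
  have hc := card_split h hJ
  have ha := u5 (J ∩ I) Finset.inter_subset_right
  have hb := v5 (J ∩ K) Finset.inter_subset_right
  rw [T_def, EL_prod h u2 v2, T_def, T_def, ← ls_lead_mul _ _ _ _ (fun n hn => ha n (Or.inl hn))
    (fun n hn => hb n (Or.inl hn)), hc]
  congr 1; ring

lemma T_empty (x : RF k l) : T ∅ x = x := by
  rw [T_def, EL_disj (S := Finset.univ) (by simp) (mem_KS_univ x)]
  simp [HahnSeries.C_apply]

lemma T_full {S : Finset (Fin l)} {x : RF k l} (hx : x ∈ R D S) : T S x = x := by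
  rw [T_def, hx.2.2.2.1, HahnSeries.coeff_single_same]

lemma T_fact' (hD : IsPartialDeriv D) {S J : Finset (Fin l)} (hJ : J ⊆ S) {x : RF k l}
    (hx : x ∈ R D S) : T J x ∈ R D (S \ J) * R D J := by
  apply T_fact hD Finset.sdiff_disjoint
  rwa [Finset.sdiff_union_of_subset hJ]

lemma T_mem (hD : IsPartialDeriv D) {S J : Finset (Fin l)} (hJ : J ⊆ S) {x : RF k l}
    (hx : x ∈ R D S) : T J x ∈ R D S := by
  have h1 : R D (S \ J) * R D J ≤ R D S := by
    rw [Submodule.mul_le]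
    intro u hu v hv
    have := R_mul hD Finset.sdiff_disjoint hu hv
    rwa [Finset.sdiff_union_of_subset hJ] at this
  exact h1 (T_fact' hD hJ hx)

lemma T_nested {S J K : Finset (Fin l)} (hJ : J ⊆ K) {x : RF k l}
    (hx : x ∈ R D S) : T J (T K x) = T K (T J x) := nested hJ hx.1 _ _

lemma T_idem (hD : IsPartialDeriv D) (J : Finset (Fin l)) (x : RF k l) : T J (T J x) = T J x := by
  have := (hom_Eu hD J (-2 * (J.card : ℤ)) (T J x)).2 (Eu_co hD J x _)
  rw [T_def J (T J x), this, HahnSeries.coeff_single_same]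

lemma T_split (hD : IsPartialDeriv D) {S J K : Finset (Fin l)} (hJ : J ⊆ S) (hK : K ⊆ S) {x : RF k l}
    (hx : x ∈ R D S) : T J (T K x) = T (J \ K) (T (J ∩ K) (T K x)) := by
  have h := T_fact' hD hK hx
  have hd : Disjoint (S \ K) K := Finset.sdiff_disjoint
  have hSK : S \ K ∪ K = S := Finset.sdiff_union_of_subset hK
  refine Submodule.mul_induction_on h ?_ ?_
  · intro u hu v hv
    have e1 : J ∩ (S \ K) = J \ K := by
      ext i; simp only [Finset.mem_inter, Finset.mem_sdiff]
      have := @hJ i; tauto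
    have e2 : (J ∩ K) ∩ (S \ K) = ∅ := by ext i; simp
    have e3 : (J ∩ K) ∩ K = J ∩ K := by ext i; simp; 
    have e4 : (J \ K) ∩ (S \ K) = J \ K := by
      ext i; simp only [Finset.mem_inter, Finset.mem_sdiff]
      have := @hJ i; tauto
    have e5 : (J \ K) ∩ K = ∅ := by ext i; simp; 
    rw [T_mul hd (by rw [hSK]; exact hJ) hu hv, e1,
      T_mul hd (by rw [hSK]; exact Finset.inter_subset_left.trans hJ) hu hv, e2, e3, T_empty,
      T_mul hd (by rw [hSK]; exact Finset.sdiff_subset.trans hJ) hu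
        (T_mem hD Finset.inter_subset_right hv), e4, e5, T_empty]
  · intro a b ha hb
    simp only [map_add, ha, hb]

lemma zv_ne_one (i : Fin l) : (zv i : RF k l) - 1 ≠ 0 := by
  intro h
  have h2 : algebraMap (MvPolynomial (Fin l) k) (RF k l) (MvPolynomial.X i - 1) = 0 := by
    rw [map_sub, map_one]; exact h
  rw [map_eq_zero_iff _ (IsFractionRing.injective _ _)] at h2
  have := congrArg (MvPolynomial.eval (fun _ => (0 : k))) h2
  simp at this

lemma two_exp {I J : Finset (Fin l)} (hd : Disjoint I J) {x : RF k l} (hx : x ∈ PhiA k l) :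
    x ∈ XX ((EL J).comp (tr J (1 : k))) (EL I) := by
  have hE : ∀ (i : Fin l) (n : ℤ), (EL J (tr J (1 : k) (zv i))).coeff n =
      (if i ∈ J ∧ n = 0 then 1 else 0) + if n = (if i ∈ J then 1 else 0) then zv i else 0 := by
    intro i n
    rw [tr_zv]
    by_cases hi : i ∈ J
    · rw [if_pos hi, map_one, map_add, map_one, HahnSeries.coeff_add, EL_zv, HahnSeries.coeff_single,
        ls_coeff_one]
      simp [hi]
    · rw [if_neg hi, EL_zv, HahnSeries.coeff_single]
      simp [hi]
  have hdc : ∀ (i : Fin l) (n m : ℤ), (((EL J).comp (tr J (1 : k))) ((EL I (zv i : RF k l)).coeff m)).coeff n =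
      if m = (if i ∈ I then 1 else 0) then 
       (if i ∈ J ∧ n = 0 then 1 else 0) + if n = (if i ∈ J then 1 else 0) then zv i else 0 else 0 := by
    intro i n m
    rw [EL_zv, HahnSeries.coeff_single]
    by_cases hm : m = (if i ∈ I then 1 else 0)
    · rw [if_pos hm, if_pos hm, RingHom.comp_apply, hE]
    · rw [if_neg hm, if_neg hm]; simp
  have hz : ∀ i : Fin l, (zv i : RF k l) ∈ XX ((EL J).comp (tr J (1 : k))) (EL I) := by
    intro i
    rw [mem_XX]
    intro n m
    rw [hdc, RingHom.comp_apply, hE, map_add, HahnSeries.coeff_add]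
    have hthis : i ∈ I → i ∉ J := fun h => Finset.disjoint_left.1 hd h
    by_cases hi : i ∈ I
    · have hj := hthis hi
      by_cases hn : n = 0
      · simp [hi, hj, hn, EL_zv, HahnSeries.coeff_single]
      · simp [hi, hj, hn]
    · by_cases hj : i ∈ J
      · by_cases hn : n = 0
        · by_cases hm : m = 0 <;> simp [hi, hj, hn, hm, ls_coeff_one]
        · by_cases hn1 : n = 1 <;> simp [hi, hj, hn, hn1, EL_zv, HahnSeries.coeff_single]
      · by_cases hn : n = 0 <;> simp [hi, hj, hn, EL_zv, HahnSeries.coeff_single]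
  induction hx using Algebra.adjoin_induction with
  | mem x hx =>
    rcases hx with ⟨i, rfl⟩ | ⟨i, j, rfl⟩
    · exact hz i
    · by_cases hij : i = j
      · subst hij; simp
      have di : i ∈ I → i ∉ J := fun h => Finset.disjoint_left.1 hd h
      have dj : j ∈ I → j ∉ J := fun h => Finset.disjoint_left.1 hd h
      refine XX_inv (sub_mem (hz i) (hz j))
        (if i ∈ J ∧ j ∈ J then 1 else 0) (if i ∈ I ∧ j ∈ I then 1 else 0) ?_ ?_
      · intro n m h
        rw [map_sub, HahnSeries.coeff_sub, map_sub, HahnSeries.coeff_sub, hdc, hdc]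
        by_cases hi : i ∈ I <;> by_cases hj : j ∈ I <;> by_cases hiJ : i ∈ J <;> 
          by_cases hjJ : j ∈ J <;>
          simp only [hi, hj, hiJ, hjJ, true_and, false_and, and_true, and_false, if_true, if_false,
            forall_true_left, not_true_eq_false, not_false_eq_true] at h di dj ⊢ <;>
          split_ifs <;> first
            | (exfalso; omega)
            | simp
      · rw [map_sub, HahnSeries.coeff_sub, map_sub, HahnSeries.coeff_sub, hdc, hdc]
        have h1 := zv_ne (k := k) i
        have h2 := zv_ne (k := k) j
        have h3 := zv_inj (k := k) hij
        have h4 := zv_ne_one (k := k) i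
        have h5 := zv_ne_one (k := k) j
        have h6 : (1 : RF k l) - zv j ≠ 0 := by intro h; apply h5; linear_combination -h
        by_cases hi : i ∈ I <;> by_cases hj : j ∈ I <;> by_cases hiJ : i ∈ J <;> 
          by_cases hjJ : j ∈ J <;> simp [hi, hj, hiJ, hjJ] at di dj ⊢ <;> assumption
  | algebraMap c =>
    rw [mem_XX]
    intro n m
    simp only [EL_const, HahnSeries.C_apply, HahnSeries.coeff_single, RingHom.comp_apply, tr_const]
    split_ifs <;> simp_all [EL_const, tr_const]
  | add x y _ _ hx hy => exact add_mem hx hy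
  | mul x y _ _ hx hy => exact mul_mem hx hy

lemma T_compl (hD : IsPartialDeriv D) {I J : Finset (Fin l)} (hd : Disjoint I J) {x : RF k l}
    (hx : x ∈ R D (I ∪ J)) : T I x = T J x := by
  obtain ⟨f1, f2, f3, f4, f5, f6, f7⟩ := T_facts hD hd hx
  obtain ⟨g1, g2, g3, g4, g5, g6, g7⟩ := T_facts hD hd.symm
    (show x ∈ R D (J ∪ I) by rwa [Finset.union_comm])
  have hx1 := (mem_XX.1 (two_exp hd hx.1)) (-2 * (J.card : ℤ)) (-2 * (I.card : ℤ))
  rw [RingHom.comp_apply, RingHom.comp_apply, ← T_def I, tr_of_Dl hD g2, (hom_Eu hD J _ _).2 g6,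
    HahnSeries.coeff_single_same] at hx1
  have h2 : (EL J (tr J (1 : k) x)).coeff (-2 * (J.card : ℤ)) = T J x := by
    apply (tr I (1 : k)).injective
    rw [tr_of_Dl hD f2, ← lsmap_coeff, ← EL_tr hd, tr_comp_disj hd, tr_of_Dl hD, T_def]
    have := R_Dl hD hx
    rwa [Dl_ext hD (Finset.subset_univ _) hx.2.1] at this
  rw [h2, (hom_Eu hD I _ _).2 f6, HahnSeries.coeff_single_same] at hx1
  exact hx1

lemma T_sdiff (hD : IsPartialDeriv D) {S J : Finset (Fin l)} (hJ : J ⊆ S) {x : RF k l}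
    (hx : x ∈ R D S) : T (S \ J) x = T J x := by
  apply T_compl hD Finset.sdiff_disjoint
  rwa [Finset.sdiff_union_of_subset hJ]

lemma T_disj (hD : IsPartialDeriv D) {S J K : Finset (Fin l)} (hJ : J ⊆ S) (hK : K ⊆ S)
    (hd : Disjoint J K) {x : RF k l} (hx : x ∈ R D S) : T J (T K x) = T K (T J x) := by
  rw [← T_sdiff hD hK hx, T_nested _ hx, T_sdiff hD hK (T_mem hD hJ hx)]
  intro i hi
  exact Finset.mem_sdiff.2 ⟨hJ hi, Finset.disjoint_left.1 hd hi⟩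

lemma T_comm_aux (hD : IsPartialDeriv D) {S J K : Finset (Fin l)} (hJ : J ⊆ S) (hK : K ⊆ S)
    {x : RF k l} (hx : x ∈ R D S) :
    T J (T K x) = T (K \ J) (T (J ∩ K) (T (J \ K) x)) := by
  have ha : J ∩ K ⊆ S := Finset.inter_subset_left.trans hJ
  have hb : J \ K ⊆ S := Finset.sdiff_subset.trans hJ
  have hab : Disjoint (J ∩ K) (J \ K) :=
    Finset.disjoint_left.2 fun i h1 h2 => (Finset.mem_sdiff.1 h2).2 (Finset.mem_inter.1 h1).2
  rw [T_split hD hJ hK hx, T_nested Finset.inter_subset_right hx,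
    T_disj hD hb hK Finset.sdiff_disjoint (T_mem hD ha hx),
    ← T_disj hD ha hb hab hx,
    T_split hD hK ha (T_mem hD hb hx)]
  have e1 : K \ (J ∩ K) = K \ J := by ext i; simp
  have e2 : K ∩ (J ∩ K) = J ∩ K := by ext i; simp
  rw [e1, e2, T_idem hD]

lemma T_comm (hD : IsPartialDeriv D) {S J K : Finset (Fin l)} (hJ : J ⊆ S) (hK : K ⊆ S)
    {x : RF k l} (hx : x ∈ R D S) : T J (T K x) = T K (T J x) := by
  rw [T_comm_aux hD hJ hK hx, T_comm_aux hD hK hJ hx, Finset.inter_comm K J]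
  have ha : J ∩ K ⊆ S := Finset.inter_subset_left.trans hJ
  have hb : J \ K ⊆ S := Finset.sdiff_subset.trans hJ
  have hc : K \ J ⊆ S := Finset.sdiff_subset.trans hK
  have hab : Disjoint (J ∩ K) (J \ K) :=
    Finset.disjoint_left.2 fun i h1 h2 => (Finset.mem_sdiff.1 h2).2 (Finset.mem_inter.1 h1).2
  have hac : Disjoint (J ∩ K) (K \ J) :=
    Finset.disjoint_left.2 fun i h1 h2 => (Finset.mem_sdiff.1 h2).2 (Finset.mem_inter.1 h1).1
  have hbc : Disjoint (J \ K) (K \ J) :=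
    Finset.disjoint_left.2 fun i h1 h2 => (Finset.mem_sdiff.1 h2).2 (Finset.mem_sdiff.1 h1).1
  rw [← T_disj hD ha hc hac (T_mem hD hb hx), ← T_disj hD hb hc hbc hx,
    T_disj hD ha hb hab (T_mem hD hc hx)]

end Comm

section Surj
variable {k : Type} [Field k] [CharZero k] {l : ℕ}
variable {D : Fin l → Derivation k (RF k l) (RF k l)}

lemma R_one : (1 : RF k l) ∈ R D ∅ := by
  refine ⟨one_mem _, one_mem _, by rw [St_apply]; simp, ?_, ?_⟩
  · rw [map_one]; simp
  · intro J hJ m hm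
    rw [Finset.subset_empty.1 hJ] at hm
    rw [map_one, ls_coeff_one, if_neg]
    simp at hm; omega

lemma R_prod (hD : IsPartialDeriv D) (Q : Finset (Finset (Fin l))) (u : Finset (Fin l) → RF k l)
    (hQ : ∀ A ∈ Q, ∀ B ∈ Q, A ≠ B → Disjoint A B) (hu : ∀ B ∈ Q, u B ∈ R D B) :
    ∏ B ∈ Q, u B ∈ R D (Q.sup id) ∧
      ∀ J ⊆ Q.sup id, T J (∏ B ∈ Q, u B) = ∏ B ∈ Q, T (J ∩ B) (u B) := by
  induction Q using Finset.induction_on with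
  | empty =>
    refine ⟨by simpa using R_one, ?_⟩
    intro J hJ
    simp at hJ
    rw [hJ, T_empty]; simp
  | insert A Q hA ih =>
    obtain ⟨h1, h2⟩ := ih (fun A hA B hB => hQ A (Finset.mem_insert_of_mem hA) B
      (Finset.mem_insert_of_mem hB)) (fun B hB => hu B (Finset.mem_insert_of_mem hB))
    have hd : Disjoint A (Q.sup id) := by
      rw [Finset.disjoint_sup_right]
      intro B hB
      exact hQ A (Finset.mem_insert_self _ _) B (Finset.mem_insert_of_mem hB)
        (fun h => hA (h ▸ hB))
    have hA' := hu A (Finset.mem_insert_self _ _)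
    have hs : (insert A Q).sup id = A ∪ Q.sup id := by rw [Finset.sup_insert]; rfl
    rw [hs, Finset.prod_insert hA]
    refine ⟨R_mul hD hd hA' h1, ?_⟩
    intro J hJ
    rw [T_mul hd hJ hA' h1, Finset.prod_insert hA, h2 _ Finset.inter_subset_right]
    congr 1
    apply Finset.prod_congr rfl
    intro B hB
    congr 2
    ext i
    have : B ⊆ Q.sup id := Finset.le_sup (f := id) hB
    have := @this i
    simp only [Finset.mem_inter]
    tauto

/-- `Q` is a set partition of `S` -/
def IsP (S : Finset (Fin l)) (Q : Finset (Finset (Fin l))) : Prop :=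
  (∀ A ∈ Q, ∀ B ∈ Q, A ≠ B → Disjoint A B) ∧ ∅ ∉ Q ∧ Q.sup id = S

variable (D) in
/-- span of products -/
def W (S : Finset (Fin l)) : Submodule k (RF k l) :=
  Submodule.span k {x | ∃ (Q : Finset (Finset (Fin l))) (u : Finset (Fin l) → RF k l),
    IsP S Q ∧ (∀ B ∈ Q, u B ∈ R0 D B) ∧ x = ∏ B ∈ Q, u B}

lemma W_mul {I K : Finset (Fin l)} (h : Disjoint I K) : W D I * W D K ≤ W D (I ∪ K) := by
  unfold W
  rw [Submodule.span_mul_span, Submodule.span_le]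
  rintro _ ⟨_, ⟨Q, u, ⟨hQ1, hQ2, hQ3⟩, hu, rfl⟩, _, ⟨P, v, ⟨hP1, hP2, hP3⟩, hv, rfl⟩, rfl⟩
  apply Submodule.subset_span
  have hd : ∀ A ∈ Q, ∀ B ∈ P, Disjoint A B := by
    intro A hA B hB
    refine Finset.disjoint_of_subset_left ?_ (Finset.disjoint_of_subset_right ?_ h)
    · rw [← hQ3]; exact Finset.le_sup (f := id) hA
    · rw [← hP3]; exact Finset.le_sup (f := id) hB
  have hQP : Disjoint Q P := by
    rw [Finset.disjoint_left]
    intro A h1 h2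
    have := hd A h1 A h2
    rw [disjoint_self] at this
    exact hQ2 (by rw [← Finset.bot_eq_empty, ← this]; exact h1)
  refine ⟨Q ∪ P, fun B => if B ∈ Q then u B else v B, ⟨?_, ?_, ?_⟩, ?_, ?_⟩
  · intro A hA B hB hAB
    rcases Finset.mem_union.1 hA with hA | hA <;> rcases Finset.mem_union.1 hB with hB | hB
    · exact hQ1 A hA B hB hAB
    · exact hd A hA B hB
    · exact (hd B hB A hA).symm
    · exact hP1 A hA B hB hAB
  · rw [Finset.mem_union]; tauto
  · rw [Finset.sup_union, hQ3, hP3]; rfl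
  · intro B hB
    by_cases hBQ : B ∈ Q
    · simp only [hBQ, if_true]; exact hu B hBQ
    · simp only [hBQ, if_false]; exact hv B ((Finset.mem_union.1 hB).resolve_left hBQ)
  · simp only
    rw [Finset.prod_union hQP]
    congr 1
    · exact Finset.prod_congr rfl fun B hB => by rw [if_pos hB]
    · exact Finset.prod_congr rfl fun B hB => by rw [if_neg (Finset.disjoint_right.1 hQP hB)]

lemma R_le_W (hD : IsPartialDeriv D) (S : Finset (Fin l)) : S.Nonempty → R D S ≤ W D S := by
  induction S using Finset.strongInduction with
  | H S ih =>
  intro hS x hx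
  have key : ∀ 𝒥 : Finset (Finset (Fin l)), (∀ J ∈ 𝒥, J ⊂ S ∧ J.Nonempty) →
      ∃ y ∈ R D S, x - y ∈ W D S ∧ ∀ J ∈ 𝒥, T J y = 0 := by
    intro 𝒥
    induction 𝒥 using Finset.induction_on with
    | empty => intro _; exact ⟨x, hx, by simp, by simp⟩
    | insert K 𝒥 hK ih2 =>
      intro h
      obtain ⟨y, hy1, hy2, hy3⟩ := ih2 fun J hJ => h J (Finset.mem_insert_of_mem hJ)
      obtain ⟨hKS, hKn⟩ := h K (Finset.mem_insert_self _ _)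
      refine ⟨y - T K y, sub_mem hy1 (T_mem hD hKS.1 hy1), ?_, ?_⟩
      · have e : x - (y - T K y) = (x - y) + T K y := by ring
        rw [e]
        refine add_mem hy2 ?_
        have hf := T_fact' hD hKS.1 hy1
        have h1 : S \ K ⊂ S := Finset.sdiff_ssubset hKS.1 hKn
        have h2 : (S \ K).Nonempty := by
          rw [Finset.sdiff_nonempty]; exact hKS.2
        have := W_mul (D := D) (Finset.sdiff_disjoint (s := K) (t := S))
          (mul_le_mul' (ih _ h1 h2) (ih _ hKS hKn) hf)
        rwa [Finset.sdiff_union_of_subset hKS.1] at this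
      · intro J hJ
        rw [map_sub]
        rcases Finset.mem_insert.1 hJ with rfl | hJ'
        · rw [T_idem hD, sub_self]
        · rw [T_comm hD (h J hJ).1.1 hKS.1 hy1, hy3 J hJ', map_zero, sub_zero]
  obtain ⟨y, hy1, hy2, hy3⟩ := key (S.ssubsets.filter (·.Nonempty)) (by
    intro J hJ
    simpa using hJ)
  have : y ∈ W D S := by
    apply Submodule.subset_span
    refine ⟨{S}, fun _ => y, ⟨?_, ?_, ?_⟩, ?_, ?_⟩
    · intro A hA B hB hAB
      rw [Finset.mem_singleton] at hA hB
      exact absurd (hA.trans hB.symm) hAB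
    · rw [Finset.mem_singleton]; exact fun h => hS.ne_empty h.symm
    · simp
    · intro B hB
      rw [Finset.mem_singleton] at hB
      subst hB
      refine ⟨hy1, fun J hJ h1 h2 => hy3 J ?_⟩
      rw [Finset.mem_filter, Finset.mem_ssubsets]
      exact ⟨Finset.ssubset_iff_subset_ne.2 ⟨hJ, h2⟩, Finset.nonempty_iff_ne_empty.2 h1⟩
    · simp
  have := add_mem hy2 this
  rwa [sub_add_cancel] at this

/-- `J` is a union of blocks -/
def Sat (Q : Finset (Finset (Fin l))) (J : Finset (Fin l)) : Prop :=
  ∀ B ∈ Q, J ∩ B = ∅ ∨ J ∩ B = B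

lemma T_R0 {S J : Finset (Fin l)} (hJ : J ⊆ S) {x : RF k l} (hx : x ∈ R0 D S) :
    T J x = if J = ∅ ∨ J = S then x else 0 := by
  split_ifs with h
  · rcases h with rfl | rfl
    · exact T_empty x
    · exact T_full hx.1
  · push Not at h
    exact hx.2 J hJ h.1.ne_empty h.2

lemma T_R0prod (hD : IsPartialDeriv D) {Q : Finset (Finset (Fin l))} {u : Finset (Fin l) → RF k l}
    (hQ : IsP Finset.univ Q) (hu : ∀ B ∈ Q, u B ∈ R0 D B) (J : Finset (Fin l)) :
    T J (∏ B ∈ Q, u B) = if Sat Q J then ∏ B ∈ Q, u B else 0 := by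
  rw [(R_prod hD Q u hQ.1 fun B hB => (hu B hB).1).2 J (by rw [hQ.2.2]; exact Finset.subset_univ _)]
  split_ifs with h
  · apply Finset.prod_congr rfl
    intro B hB
    rw [T_R0 Finset.inter_subset_right (hu B hB), if_pos (h B hB)]
  · unfold Sat at h
    push Not at h
    obtain ⟨B, hB, h1, h2⟩ := h
    apply Finset.prod_eq_zero hB
    rw [T_R0 Finset.inter_subset_right (hu B hB), if_neg]
    rintro (h | h)
    · exact h1.ne_empty h
    · exact h2 h

lemma Sat_le {P Q : Finset (Finset (Fin l))} (hP : IsP Finset.univ P) (hQ : IsP Finset.univ Q)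
    (h : ∀ J, Sat P J ↔ Sat Q J) : P ⊆ Q := by
  have self : ∀ Q : Finset (Finset (Fin l)), IsP Finset.univ Q → ∀ B ∈ Q, Sat Q B := by
    intro Q hQ B hB C hC
    by_cases hBC : B = C
    · right; rw [hBC, Finset.inter_self]
    · left; exact Finset.disjoint_iff_inter_eq_empty.1 (hQ.1 B hB C hC hBC)
  intro B hB
  obtain ⟨i, hi⟩ : B.Nonempty := Finset.nonempty_iff_ne_empty.2 fun h => hP.2.1 (h ▸ hB)
  have hi' : i ∈ Q.sup id := by rw [hQ.2.2]; exact Finset.mem_univ i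
  rw [Finset.mem_sup] at hi'
  obtain ⟨C, hC, hiC⟩ := hi'
  have h1 : B ∩ C = C := ((h B).1 (self P hP B hB) C hC).resolve_left
    (Finset.nonempty_iff_ne_empty.1 ⟨i, Finset.mem_inter.2 ⟨hi, hiC⟩⟩)
  have h2 : C ∩ B = B := ((h C).2 (self Q hQ C hC) B hB).resolve_left
    (Finset.nonempty_iff_ne_empty.1 ⟨i, Finset.mem_inter.2 ⟨hiC, hi⟩⟩)
  rw [Finset.inter_comm] at h2
  rw [← h2, h1]; exact hC

lemma Sat_eq {P Q : Finset (Finset (Fin l))} (hP : IsP Finset.univ P) (hQ : IsP Finset.univ Q)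
    (h : ∀ J, Sat P J ↔ Sat Q J) : P = Q :=
  Finset.Subset.antisymm (Sat_le hP hQ h) (Sat_le hQ hP fun J => (h J).symm)

lemma IsP_of (P : Finpartition (Finset.univ : Finset (Fin l))) : IsP Finset.univ P.parts :=
  ⟨fun _ hA _ hB hAB => P.disjoint hA hB hAB, P.bot_notMem, P.sup_parts⟩

lemma separate (y : Finpartition (Finset.univ : Finset (Fin l)) → RF k l)
    (hy : ∀ P J, T J (y P) = if Sat P.parts J then y P else 0) (h0 : ∑ P, y P = 0) (P0) : y P0 = 0 := by
  have key : ∀ 𝒥 : Finset (Finset (Fin l)),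
      ∑ P with ∀ J ∈ 𝒥, (Sat P.parts J ↔ Sat P0.parts J), y P = 0 := by
    intro 𝒥
    induction 𝒥 using Finset.induction_on with
    | empty => simpa using h0
    | insert K 𝒥 hK ih =>
      have e : ∀ P : Finpartition (Finset.univ : Finset (Fin l)),
          (∀ J ∈ insert K 𝒥, (Sat P.parts J ↔ Sat P0.parts J)) ↔
          (∀ J ∈ 𝒥, (Sat P.parts J ↔ Sat P0.parts J)) ∧ (Sat P.parts K ↔ Sat P0.parts K) := by
        intro P; rw [Finset.forall_mem_insert]; exact and_comm
      simp only [e]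
      rw [← Finset.filter_filter]
      have h1 := congrArg (T K) ih
      rw [map_sum, map_zero] at h1
      simp only [hy] at h1
      rw [← Finset.sum_filter] at h1
      by_cases hs : Sat P0.parts K
      · simpa only [hs, iff_true] using h1
      · simp only [hs, iff_false]
        rw [← Finset.sum_filter_add_sum_filter_not _ (fun P => Sat P.parts K), h1, zero_add] at ih
        exact ih
  have h := key Finset.univ
  rw [Finset.sum_eq_single P0] at h
  · exact h
  · intro P hP hne
    exfalso
    simp only [Finset.mem_filter, Finset.mem_univ, true_and, forall_true_left] at hP
    exact hne (Finpartition.ext (Sat_eq (IsP_of P) (IsP_of P0) hP))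
  · intro h; simp at h

end Surj

section Fin
variable {k : Type} [Field k] [CharZero k] {l : ℕ}
variable {D : Fin l → Derivation k (RF k l) (RF k l)}

lemma LI (hD : IsPartialDeriv D) {ι : Type} [Fintype ι] (B : ι → Finset (Fin l))
    (hB : ∀ i j, i ≠ j → Disjoint (B i) (B j)) {κ : ι → Type} (b : ∀ i, κ i → RF k l)
    (hb : ∀ i, LinearIndependent k (b i)) (hbB : ∀ i e, b i e ∈ KS k (B i)) :
    LinearIndependent k (fun f : (∀ i, κ i) => ∏ i, b i (f i)) := by
  rw [linearIndependent_iff']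
  intro s g h0 f0 hf0
  have key : ∀ t : Finset ι,
      ∑ f ∈ s with ∀ i ∈ t, f i = f0 i, g f • ∏ i ∈ tᶜ, b i (f i) = 0 := by
    intro t
    induction t using Finset.induction_on with
    | empty => simpa using h0
    | insert j t hj ih =>
      have e : ∀ f : (∀ i, κ i), (∀ i ∈ insert j t, f i = f0 i) ↔
          (∀ i ∈ t, f i = f0 i) ∧ f j = f0 j := by
        intro f; rw [Finset.forall_mem_insert]; exact and_comm
      simp only [e]
      rw [← Finset.filter_filter]
      set s' := s.filter (fun f => ∀ i ∈ t, f i = f0 i) with hs'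
      have hc : (tᶜ : Finset ι) = insert j (insert j t)ᶜ := by
        ext i
        simp only [Finset.mem_compl, Finset.mem_insert]
        by_cases h : i = j
        · subst h; simp [hj]
        · simp [h]
      have hj' : j ∉ (insert j t)ᶜ := by simp
      have h1 : ∑ e ∈ s'.image (fun f : (∀ i, κ i) => f j),
          (∑ f ∈ s'.filter (fun f : (∀ i, κ i) => f j = e), g f • ∏ i ∈ (insert j t)ᶜ, b i (f i)) * b j e = 0 := by
        rw [← ih, ← Finset.sum_fiberwise_of_maps_to (g := fun f : (∀ i, κ i) => f j)
          (t := s'.image (fun f : (∀ i, κ i) => f j)) (fun f hf => Finset.mem_image_of_mem _ hf)]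
        apply Finset.sum_congr rfl
        intro e he
        rw [Finset.sum_mul]
        apply Finset.sum_congr rfl
        intro f hf
        rw [Finset.mem_filter] at hf
        rw [hc, Finset.prod_insert hj', ← hf.2, smul_mul_assoc, mul_comm]
      refine lin_disj hD (I := (B j)ᶜ) (J := B j) disjoint_compl_left (b j) (hb j) (hbB j) _ _
        ?_ h1 (f0 j) (Finset.mem_image.2 ⟨f0, by simp [hs', hf0], rfl⟩)
      intro e he
      refine sum_mem fun f hf => smul_mem_KS _ (prod_mem fun i hi => ?_)
      refine KS_mono ?_ (hbB i (f i))
      have hij : i ≠ j := by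
        rintro rfl; exact hj' hi
      exact Finset.subset_compl_iff_disjoint_right.2 (hB i j hij)
  have h := key Finset.univ
  have e : ∀ f : (∀ i, κ i), (∀ i ∈ Finset.univ, f i = f0 i) ↔ f = f0 := by
    intro f; simp [funext_iff]
  simp only [e] at h
  rw [Finset.sum_filter, Finset.sum_ite_eq' , if_pos hf0] at h
  simpa using h

variable (D) in
/-- the product map for one partition -/
def LP (P : Finpartition (Finset.univ : Finset (Fin l))) :
    (⨂[k] B : ↥P.parts, ↥(Submodule.span k {α : RF k l | AdmissibleInd D (↑B) α})) →ₗ[k] RF k l :=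
  PiTensorProduct.lift
      ((MultilinearMap.mkPiAlgebra k ↥P.parts (RF k l)).compLinearMap
        (fun B => (Submodule.span k {α : RF k l | AdmissibleInd D (↑B) α}).subtype))

lemma LP_tprod (P : Finpartition (Finset.univ : Finset (Fin l)))
    (u : ∀ B : ↥P.parts, ↥(Submodule.span k {α : RF k l | AdmissibleInd D (↑B) α})) :
    LP D P (PiTensorProduct.tprod k u) = ∏ B, (u B : RF k l) := by
  unfold LP
  rw [PiTensorProduct.lift.tprod]
  simp

lemma LP_inj (hD : IsPartialDeriv D) (P : Finpartition (Finset.univ : Finset (Fin l))) :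
    Function.Injective (LP D P) := by
  let b := fun B : ↥P.parts => Module.Free.chooseBasis k
    ↥(Submodule.span k {α : RF k l | AdmissibleInd D (↑B) α})
  have h := LI hD (fun B : ↥P.parts => (B : Finset (Fin l)))
    (fun i j hij => P.disjoint i.2 j.2 (fun h => hij (Subtype.ext h)))
    (fun B e => ((b B e : ↥(Submodule.span k {α : RF k l | AdmissibleInd D (↑B) α})) : RF k l))
    (fun B => (b B).linearIndependent.map' (Submodule.subtype _) (Submodule.ker_subtype _))
    (fun B e => by
      exact ((span_admInd (D := D) (B : Finset (Fin l))).le (b B e).2).1.2.1)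
  have h2 : LinearIndependent k (LP D P ∘ Basis.piTensorProduct b) := by
    convert h using 1
    funext f
    rw [Function.comp_apply, Basis.piTensorProduct_apply, LP_tprod]
  intro x y hxy
  have hx2 : ∀ x, Finsupp.linearCombination k (LP D P ∘ Basis.piTensorProduct b)
      ((Basis.piTensorProduct b).repr x) = LP D P x := by
    intro x
    rw [← Finsupp.apply_linearCombination, Module.Basis.linearCombination_repr]
  exact (Basis.piTensorProduct b).repr.injective (h2 (by rw [hx2, hx2, hxy]))

lemma prod_conv (P : Finpartition (Finset.univ : Finset (Fin l))) (u : ↥P.parts → RF k l) :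
    ∏ B, u B = ∏ B ∈ P.parts, (if h : B ∈ P.parts then u ⟨B, h⟩ else 0) := by
  rw [← Finset.prod_coe_sort P.parts (fun B => if h : B ∈ P.parts then u ⟨B, h⟩ else 0)]
  apply Finset.prod_congr rfl
  intro B _
  rw [dif_pos B.2]

lemma LP_T (hD : IsPartialDeriv D) (P : Finpartition (Finset.univ : Finset (Fin l)))
    (x : ⨂[k] B : ↥P.parts, ↥(Submodule.span k {α : RF k l | AdmissibleInd D (↑B) α}))
    (J : Finset (Fin l)) :
    T J (LP D P x) = if Sat P.parts J then LP D P x else 0 := by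
  induction x using PiTensorProduct.induction_on with
  | smul_tprod r u =>
    rw [map_smul, LP_tprod, map_smul, prod_conv, T_R0prod hD (IsP_of P)]
    · split_ifs <;> simp
    · intro B hB
      rw [dif_pos hB, ← span_admInd]
      exact (u ⟨B, hB⟩).2
  | add x y hx hy =>
    rw [map_add, map_add, hx, hy]
    split_ifs <;> simp

lemma LP_R (hD : IsPartialDeriv D) (P : Finpartition (Finset.univ : Finset (Fin l)))
    (x : ⨂[k] B : ↥P.parts, ↥(Submodule.span k {α : RF k l | AdmissibleInd D (↑B) α})) :
    LP D P x ∈ R D Finset.univ := by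
  induction x using PiTensorProduct.induction_on with
  | smul_tprod r u =>
    rw [map_smul, LP_tprod, prod_conv]
    apply Submodule.smul_mem
    have := (R_prod hD P.parts (fun B => if h : B ∈ P.parts then (u ⟨B, h⟩ : RF k l) else 0)
      (IsP_of P).1 (by
        intro B hB
        have h := (span_admInd (D := D) B).le (u ⟨B, hB⟩).2
        simp only [dif_pos hB]
        exact h.1)).1
    rwa [(IsP_of P).2.2] at this
  | add x y hx hy =>
    rw [map_add]; exact add_mem hx hy

lemma productMap_lof (P : Finpartition (Finset.univ : Finset (Fin l)))
    (x : ⨂[k] B : ↥P.parts, ↥(Submodule.span k {α : RF k l | AdmissibleInd D (↑B) α})) :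
    productMap D (DirectSum.lof k _ _ P x) = LP D P x := by
  unfold productMap
  rw [DirectSum.toModule_lof]; rfl

lemma productMap_sum (x : ⨁ P : Finpartition (Finset.univ : Finset (Fin l)),
        ⨂[k] B : ↥P.parts,
          ↥(Submodule.span k {α : RF k l | AdmissibleInd D (↑B) α})) :
    productMap D x = ∑ P, LP D P (x P) := by
  induction x using DirectSum.induction_on with
  | zero => simp
  | of P x =>
    have := productMap_lof P x
    rw [DirectSum.lof_eq_of] at this
    rw [this, Finset.sum_eq_single P]
    · rw [DirectSum.of_eq_same]
    · intro Q _ hQ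
      rw [DirectSum.of_eq_of_ne _ _ _ hQ, map_zero]
    · intro h; simp at h
  | add x y hx hy =>
    rw [map_add, hx, hy, ← Finset.sum_add_distrib]
    apply Finset.sum_congr rfl
    intro P _
    rw [DirectSum.add_apply, map_add]

lemma final_inj (hD : IsPartialDeriv D) : Function.Injective (productMap D) := by
  intro x y hxy
  rw [productMap_sum, productMap_sum, ← sub_eq_zero, ← Finset.sum_sub_distrib] at hxy
  have h := separate (fun P => LP D P (x P) - LP D P (y P)) (fun P J => by
    rw [map_sub, LP_T hD, LP_T hD]; split_ifs <;> simp) hxy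
  refine DFinsupp.ext fun P => ?_
  exact LP_inj hD P (sub_eq_zero.1 (h P))

lemma final_range (hl : 1 ≤ l) (hD : IsPartialDeriv D) : LinearMap.range (productMap D)
      = Submodule.span k {α : RF k l | Admissible D Finset.univ α} := by
  rw [span_adm]
  apply le_antisymm
  · rintro _ ⟨x, rfl⟩
    rw [productMap_sum]
    exact sum_mem fun P _ => LP_R hD P _
  · refine (R_le_W hD _ ⟨⟨0, hl⟩, Finset.mem_univ _⟩).trans ?_
    unfold W
    rw [Submodule.span_le]
    rintro _ ⟨Q, u, hQ, hu, rfl⟩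
    let P : Finpartition (Finset.univ : Finset (Fin l)) :=
      { parts := Q
        supIndep := by
          rw [Finset.supIndep_iff_pairwiseDisjoint]
          intro A hA B hB hAB
          exact hQ.1 A hA B hB hAB
        sup_parts := hQ.2.2
        bot_notMem := hQ.2.1 }
    refine ⟨DirectSum.lof k _ _ P (PiTensorProduct.tprod k
      (fun B : ↥P.parts => ⟨u B, by rw [span_admInd]; exact hu B B.2⟩)), ?_⟩
    rw [productMap_lof, LP_tprod]
    exact Finset.prod_coe_sort Q u

end Fin

/-- every admissible function can be written uniquely as a linear
combination of products of indecomposable admissible functions: the multiplication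
map from `⊕_P ⊗_{B ∈ P} R₀^{|B|}` is injective with range exactly `R^l`. -/
theorem statement10 {k : Type} [Field k] [CharZero k] {l : ℕ} (hl : 1 ≤ l)
    (D : Fin l → Derivation k (RF k l) (RF k l)) (hD : IsPartialDeriv D) :
    Function.Injective (productMap D) ∧
    LinearMap.range (productMap D)
      = Submodule.span k {α : RF k l | Admissible D Finset.univ α} := by
  exact ⟨final_inj hD, final_range hl hD⟩

end Griess
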